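/- arXiv:2010.12564 — 3 statements merged into one kernel-verified Lean document; each statement's English description precedes it below -/
import Mathlib

section
/- Let (R, m) be a d-dimensional complete Noetherian local domain of prime characteristic p with absolute integral closure R^+, let x_1, …, x_d be a system of parameters of R, let Λ be a set of indeterminates, and let T = R^+(t_λ : λ ∈ Λ). Then for every 1 ≤ n ≤ d, the sequence x_1, …, x_n is a regular sequence on T. -/
open IsLocalRing TensorProduct
set_option synthInstance.maxHeartbeats 1000000
set_option maxHeartbeats 1000000

/-- The absolute integral closure `R⁺` of a domain `R`: the integral closure of `R`
in an algebraic closure of its fraction field. -/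
noncomputable abbrev RPlus (R : Type) [CommRing R] [IsDomain R] : Type :=
  ↥(integralClosure R (AlgebraicClosure (FractionRing R)))

/-- A system of parameters of a local ring: `d` elements generating an ideal whose
radical is the maximal ideal, where `d` is the Krull dimension. -/
def IsSOP (R : Type) [CommRing R] [IsLocalRing R] {d : ℕ} (x : Fin d → R) : Prop :=
  ringKrullDim R = d ∧ (Ideal.span (Set.range x)).radical = maximalIdeal R

/-- `T = R⁺(t_λ : λ ∈ Λ)`: the localization of the polynomial ring `R⁺[t_λ : λ ∈ Λ]`
at the prime ideal generated by the maximal ideal of the quasilocal ring `R⁺`. -/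
noncomputable abbrev TRing (R : Type) [CommRing R] [IsDomain R] (Λ : Type)
    [IsLocalRing (RPlus R)]
    [hP : (Ideal.map (MvPolynomial.C (σ := Λ)) (maximalIdeal (RPlus R))).IsPrime] : Type :=
  Localization.AtPrime (Ideal.map (MvPolynomial.C (σ := Λ)) (maximalIdeal (RPlus R)))

/-- The canonical map `R⁺ → T`. -/
noncomputable def plusToT (R : Type) [CommRing R] [IsDomain R] (Λ : Type)
    [IsLocalRing (RPlus R)]
    [hP : (Ideal.map (MvPolynomial.C (σ := Λ)) (maximalIdeal (RPlus R))).IsPrime] :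
    RPlus R →+* TRing R Λ :=
  (algebraMap (MvPolynomial Λ (RPlus R)) (TRing R Λ)).comp MvPolynomial.C

/-- The canonical map `R → T`. -/
noncomputable def toT (R : Type) [CommRing R] [IsDomain R] (Λ : Type)
    [IsLocalRing (RPlus R)]
    [hP : (Ideal.map (MvPolynomial.C (σ := Λ)) (maximalIdeal (RPlus R))).IsPrime] :
    R →+* TRing R Λ :=
  (plusToT R Λ).comp (algebraMap R (RPlus R))

/-!
Lifting the residue field `k` into `R` turns `Xᵢ ↦ xᵢ` into a finite injective map from
`A = k⟦X₁, …, X_d⟧` to `R`, so `R⁺ = A⁺`. The `Xᵢ` form a regular sequence on `A`, hence on every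
flat `A`-algebra, and `R⁺ → T` is flat; everything reduces to the flatness of `A⁺` over `A`.

Flatness holds more generally for the integral closure `M` in an algebraically closed field of
characteristic `p` of a local Noetherian ring `A` over which all modules have bounded flat
dimension. By induction on `dim A`, the localizations of `M` at the nonmaximal primes are flat.
Therefore, for every finitely generated `V ⊆ M` and every `a` in the maximal ideal, a power of `a`
times the inclusion `V → M` factors through a finite free module; in particular `Tor₁(N, M)` is
`a`-power torsion for finitely generated `N`.

A maximal regular sequence `y` of `A` stays regular on `M`. Suppose `yⱼ r ∈ (yₗ : l ∈ S)M` and put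
`Y = ∏ yₗ`. Taking `pᵉ`-th powers and factoring through free modules, `r ^ pᵉ` is congruent modulo
the `yₗ ^ pᵉ` to `Y ^ (pᵉ - pᵉ⁰)` times an element of a finitely generated module independent of
`e`. A linear relation between these elements is an equation
`r ^ pᴱ - ∑ aᵢ Y ^ (pᴱ - pⁱ) r ^ pⁱ ∈ (yₗ ^ pᴱ)M`. Its left side is additive in `r`, so it can be
solved in `M` one `yₗ` at a time, which gives `r ∈ (yₗ)M`.

Since `y` is maximal, the residue field embeds into `A/(y)`. If `M` is the quotient of a flat module
by a flat submodule, this embedding gives `Tor₁(A/m, M) = 0`, while `Tor₁(A/P, M) = 0` for the other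
primes `P` because it is torsion under a nonzerodivisor of `A/P`; hence `M` is flat. Applying this
repeatedly down a finite flat resolution shows that `M` is flat in general.
-/

universe u

namespace PlusClosure

section EquationalLemma

open Polynomial

variable {M : Type*} [CommRing M] {p : ℕ}

theorem eval_add_of_support_subset_powers [ExpChar M p] {f : M[X]}
    (hf : ∀ n ∈ f.support, ∃ i, n = p ^ i) (x y : M) :
    f.eval (x + y) = f.eval x + f.eval y := by
  simp only [eval_eq_sum, sum_def, ← Finset.sum_add_distrib, ← mul_add]
  refine Finset.sum_congr rfl fun n hn ↦ ?_
  obtain ⟨i, rfl⟩ := hf n hn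
  rw [add_pow_expChar_pow]

theorem eval_sub_sum_of_support_subset_powers [ExpChar M p] {f : M[X]}
    (hf : ∀ n ∈ f.support, ∃ i, n = p ^ i) {ι : Type*} (S : Finset ι) (t : ι → M) (x : M) :
    f.eval (x - ∑ l ∈ S, t l) = f.eval x - ∑ l ∈ S, f.eval (t l) := by
  let evalHom : M →+ M := AddMonoidHom.mk' f.eval (eval_add_of_support_subset_powers hf)
  change evalHom _ = evalHom x - ∑ l ∈ S, evalHom (t l)
  rw [map_sub, map_sum]

theorem dvd_of_eval_scaleRoots_eq_zero (L : Type*) [Field L] [Algebra M L]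
    [IsIntegrallyClosedIn M L] {f : M[X]} (hf : f.Monic) {c u : M} (hc : c ≠ 0)
    (hu : (scaleRoots f c).eval u = 0) : c ∣ u := by
  have hinj : Function.Injective (algebraMap M L) := IsIntegralClosure.algebraMap_injective M M L
  have hcL : algebraMap M L c ≠ 0 := by rwa [Ne, map_eq_zero_iff _ hinj]
  have hroot : f.eval₂ (algebraMap M L) (algebraMap M L u / algebraMap M L c) = 0 := by
    have h := scaleRoots_eval₂_mul (p := f) (algebraMap M L) c
      (r := algebraMap M L u / algebraMap M L c)
    rw [mul_div_cancel₀ _ hcL, eval₂_at_apply, hu, map_zero] at h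
    exact (mul_eq_zero.mp h.symm).resolve_left (pow_ne_zero _ hcL)
  obtain ⟨v, hv⟩ := IsIntegrallyClosedIn.isIntegral_iff.mp (⟨f, hf, hroot⟩ : IsIntegral M _)
  refine ⟨v, hinj ?_⟩
  rw [map_mul, hv, mul_div_cancel₀ _ hcL]

theorem exists_eval_eq (L : Type*) [Field L] [IsAlgClosed L] [Algebra M L]
    [IsIntegrallyClosedIn M L] {f : M[X]} (hf : f.Monic) (hf0 : f.natDegree ≠ 0) (s : M) :
    ∃ t, f.eval t = s := by
  have hinj : Function.Injective (algebraMap M L) := IsIntegralClosure.algebraMap_injective M M L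
  have hdeg : (C s).degree < f.degree :=
    degree_C_le.trans_lt (natDegree_pos_iff_degree_pos.mp (Nat.pos_of_ne_zero hf0))
  have hmonic : (f - C s).Monic := hf.sub_of_left hdeg
  have hdeg0 : (f - C s).degree ≠ 0 := by
    rw [degree_sub_eq_left_of_degree_lt hdeg]
    exact (natDegree_pos_iff_degree_pos.mp (Nat.pos_of_ne_zero hf0)).ne'
  obtain ⟨x, hx⟩ := IsAlgClosed.exists_eval₂_eq_zero_of_injective (algebraMap M L) hinj _ hdeg0
  obtain ⟨t, rfl⟩ := IsIntegrallyClosedIn.isIntegral_iff.mp (⟨_, hmonic, hx⟩ : IsIntegral M x)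
  refine ⟨t, hinj ?_⟩
  simpa [eval₂_at_apply, sub_eq_zero] using hx

/-- The additive polynomial `X ^ p ^ E - ∑ aᵢ X ^ p ^ i`, the sum running over `e ≤ i < E`. -/
noncomputable def pPolynomial (p e E : ℕ) (a : ℕ → M) : M[X] :=
  X ^ p ^ E - ∑ i ∈ Finset.Ico e E, C (a i) * X ^ p ^ i

theorem degree_sum_C_mul_X_pow_pow_lt (hp : 1 < p) (e E : ℕ) (a : ℕ → M) :
    (∑ i ∈ Finset.Ico e E, C (a i) * X ^ p ^ i).degree < ((p ^ E : ℕ) : WithBot ℕ) := by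
  refine (degree_sum_le _ _).trans_lt ((Finset.sup_lt_iff (WithBot.bot_lt_coe _)).mpr ?_)
  intro i hi
  refine (degree_C_mul_X_pow_le _ _).trans_lt ?_
  exact_mod_cast Nat.pow_lt_pow_right hp (Finset.mem_Ico.mp hi).2

theorem monic_pPolynomial (hp : 1 < p) (e E : ℕ) (a : ℕ → M) :
    (pPolynomial p e E a).Monic := by
  nontriviality M
  refine (monic_X_pow _).sub_of_left ?_
  rw [degree_X_pow]
  exact degree_sum_C_mul_X_pow_pow_lt hp e E a

theorem natDegree_pPolynomial [Nontrivial M] (hp : 1 < p) (e E : ℕ) (a : ℕ → M) :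
    (pPolynomial p e E a).natDegree = p ^ E := by
  have hlt := degree_sum_C_mul_X_pow_pow_lt hp e E a
  refine natDegree_eq_of_degree_eq_some ?_
  rw [pPolynomial, degree_sub_eq_left_of_degree_lt (by rwa [degree_X_pow]), degree_X_pow]

theorem eval_scaleRoots_pPolynomial [Nontrivial M] (hp : 1 < p) (e E : ℕ) (a : ℕ → M)
    (c r : M) :
    (scaleRoots (pPolynomial p e E a) c).eval r =
      r ^ p ^ E - ∑ i ∈ Finset.Ico e E, a i * c ^ (p ^ E - p ^ i) * r ^ p ^ i := by
  have hmem : ∀ i ≤ E, p ^ i < p ^ E + 1 := fun i hi ↦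
    Nat.lt_succ_of_le (Nat.pow_le_pow_right (by lia) hi)
  rw [eval_eq_sum_range, natDegree_scaleRoots]
  simp only [coeff_scaleRoots, natDegree_pPolynomial hp]
  simp only [pPolynomial, coeff_sub, coeff_X_pow, finsetSum_coeff, coeff_C_mul, sub_mul,
    Finset.sum_sub_distrib, Finset.sum_mul]
  rw [Finset.sum_comm]
  congr 1
  · simp
  · refine Finset.sum_congr rfl fun i hi ↦ ?_
    simp [hmem i (Finset.mem_Ico.mp hi).2.le]

theorem exists_eq_pow_of_mem_support_pPolynomial (e E : ℕ) (a : ℕ → M) :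
    ∀ n ∈ (pPolynomial p e E a).support, ∃ i, n = p ^ i := by
  intro n hn
  by_contra! h
  refine mem_support_iff.mp hn ?_
  simp [pPolynomial, coeff_X_pow, h]

/-- The substitution `r - ∑ yₗ tₗ` trades the equation for a homogeneous one, and a solution of the
latter is divisible by `∏ yₗ` because `M` is integrally closed in `L`. -/
theorem mem_span_of_eval_scaleRoots_mem_span [IsDomain M] (L : Type*) [Field L] [IsAlgClosed L]
    [Algebra M L] [IsIntegrallyClosedIn M L] [Fact p.Prime] [CharP M p]
    {f : M[X]} (hf : f.Monic) (hsupp : ∀ n ∈ f.support, ∃ i, n = p ^ i)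
    {ι : Type*} {S : Finset ι} (hS : S.Nonempty) {y : ι → M} (hy : ∀ l ∈ S, y l ≠ 0) {r : M}
    (h : (scaleRoots f (∏ l ∈ S, y l)).eval r ∈ Ideal.span ((y ^ f.natDegree) '' S)) :
    r ∈ Ideal.span (y '' S) := by
  classical
  have hf0 : f.natDegree ≠ 0 := by
    obtain ⟨i, hi⟩ := hsupp _ (natDegree_mem_support_of_nonzero hf.ne_zero)
    rw [hi]
    exact pow_ne_zero i (Fact.out : p.Prime).ne_zero
  set Y := ∏ l ∈ S, y l
  have hYerase : ∀ l ∈ S, Y = (∏ k ∈ S.erase l, y k) * y l := fun l hl ↦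
    (Finset.prod_erase_mul S y hl).symm
  obtain ⟨s, hs⟩ := (Submodule.mem_span_image_finset_iff_exists_fun' M).mp h
  choose t ht using fun l ↦ exists_eval_eq L
    ((monic_scaleRoots_iff (∏ k ∈ S.erase l, y k)).mpr hf) (by rwa [natDegree_scaleRoots]) (s l)
  have hscale : ∀ l ∈ S, (scaleRoots f Y).eval (y l * t l) = s l • (y ^ f.natDegree) l := by
    intro l hl
    rw [hYerase l hl, scaleRoots_mul, scaleRoots_eval_mul, ht, natDegree_scaleRoots, smul_eq_mul,
      mul_comm, Pi.pow_apply]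
  have hzero : (scaleRoots f Y).eval (r - ∑ l ∈ S, y l * t l) = 0 := by
    have : ExpChar M p := .prime Fact.out
    rw [eval_sub_sum_of_support_subset_powers (p := p)
      (fun n hn ↦ hsupp n (support_scaleRoots_le f Y hn)), Finset.sum_congr rfl hscale, hs,
      sub_self]
  have hdvd : Y ∣ r - ∑ l ∈ S, y l * t l :=
    dvd_of_eval_scaleRoots_eq_zero L hf (Finset.prod_ne_zero_iff.mpr hy) hzero
  have hymem : ∀ l ∈ S, y l ∈ Ideal.span (y '' S) := fun l hl ↦
    Ideal.subset_span (Set.mem_image_of_mem y hl)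
  obtain ⟨l, hl⟩ := hS
  have hYmem : Y ∈ Ideal.span (y '' S) := hYerase l hl ▸ Ideal.mul_mem_left _ _ (hymem l hl)
  exact (Submodule.sub_mem_iff_left _ (sum_mem fun l hl ↦ Ideal.mul_mem_right _ _ (hymem l hl))).mp
    (Ideal.mem_of_dvd _ hdvd hYmem)

end EquationalLemma

section PermutableRegularity

open RingTheory.Sequence

variable {A : Type*} [CommRing A] {M : Type*} [AddCommGroup M] [Module A M] {ι : Type*}

variable (M) in
/-- A family `y` of elements of `A` is permutably regular on `M` if each `y j` is a nonzerodivisor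
modulo any finite set of other members of the family. This is the order-free form of a weakly
regular sequence. -/
def IsPermutablyRegular (y : ι → A) : Prop :=
  ∀ (S : Finset ι), ∀ j ∉ S,
    IsSMulRegular (M ⧸ (Ideal.span (y '' S) • ⊤ : Submodule A M)) (y j)

theorem mem_sup_span_singleton_smul_iff {J : Ideal A} {t : A} {N : Submodule A M} {x : M} :
    x ∈ (J ⊔ Ideal.span {t}) • N ↔ ∃ u ∈ J • N, ∃ z ∈ N, u + t • z = x := by
  simp only [Submodule.sup_smul, Submodule.ideal_span_singleton_smul, Submodule.mem_sup,
    Submodule.mem_smul_pointwise_iff_exists, exists_exists_and_eq_and]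

theorem span_image_eq_sup_of_mem [DecidableEq ι] {S : Finset ι} {l : ι} (hl : l ∈ S) (y : ι → A) :
    Ideal.span (y '' S) = Ideal.span (y '' ↑(S.erase l)) ⊔ Ideal.span {y l} := by
  rw [sup_comm, ← Ideal.span_insert, ← Set.image_insert_eq, ← Finset.coe_insert,
    Finset.insert_erase hl]

theorem isSMulRegular_quotient_sup_span_pow {J : Ideal A} {s t : A}
    (ht : IsSMulRegular (M ⧸ (J • ⊤ : Submodule A M)) t)
    (hs : IsSMulRegular (M ⧸ ((J ⊔ Ideal.span {t}) • ⊤ : Submodule A M)) s) (n : ℕ) :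
    IsSMulRegular (M ⧸ ((J ⊔ Ideal.span {t ^ n}) • ⊤ : Submodule A M)) s := by
  simp only [isSMulRegular_quotient_iff_mem_of_smul_mem, mem_sup_span_singleton_smul_iff] at hs ⊢
  induction n with
  | zero => exact fun x _ ↦ ⟨0, zero_mem _, x, trivial, by simp⟩
  | succ n ih =>
    rintro x ⟨u, hu, z, -, hxz⟩
    obtain ⟨v, hv, w, -, rfl⟩ := ih x ⟨u, hu, t • z, trivial, by rw [← hxz, smul_smul, pow_succ]⟩
    have htn : t ^ n • (s • w - t • z) ∈ J • (⊤ : Submodule A M) := by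
      have hrw : t ^ n • (s • w - t • z) = u - s • v := by
        rw [smul_add] at hxz
        rw [smul_sub, smul_comm, smul_smul _ t, ← pow_succ, sub_eq_sub_iff_add_eq_add, hxz,
          add_comm]
      exact hrw ▸ sub_mem hu (Submodule.smul_mem _ _ hv)
    obtain ⟨v', hv', w', -, rfl⟩ := hs w
      ⟨_, mem_of_isSMulRegular_quotient_of_smul_mem (ht.pow n) htn, z, trivial, sub_add_cancel _ _⟩
    exact ⟨v + t ^ n • v', add_mem hv (Submodule.smul_mem _ _ hv'), w', trivial, by
      rw [smul_add, smul_smul, ← pow_succ, add_assoc]⟩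

theorem isSMulRegular_quotient_smul_top_of_flat {J : Ideal A} {s : A}
    (hs : IsSMulRegular (A ⧸ (J • ⊤ : Submodule A A)) s) (F : Type*) [AddCommGroup F] [Module A F]
    [Module.Flat A F] : IsSMulRegular (F ⧸ (J • ⊤ : Submodule A F)) s := by
  have hquot : IsSMulRegular (A ⧸ J) s :=
    ((Submodule.quotEquivOfEq _ _ (by simp)).isSMulRegular_congr s).mp hs
  exact ((TensorProduct.tensorQuotEquivQuotSMul F J).isSMulRegular_congr s).mp (hquot.lTensor F)

namespace IsPermutablyRegular

variable {y : ι → A}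

theorem update_pow [DecidableEq ι] (hy : IsPermutablyRegular M y) (l : ι) (n : ℕ) :
    IsPermutablyRegular M (Function.update y l (y l ^ n)) := by
  have himage : ∀ S : Finset ι, l ∉ S → Function.update y l (y l ^ n) '' S = y '' S := fun S hl ↦
    Set.image_congr fun i hi ↦ Function.update_of_ne (ne_of_mem_of_not_mem hi hl) _ _
  intro S j hj
  by_cases hlS : l ∈ S
  · have hjl : j ≠ l := fun h ↦ hj (h ▸ hlS)
    rw [span_image_eq_sup_of_mem hlS, himage _ (S.notMem_erase l), Function.update_self,
      Function.update_of_ne hjl]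
    refine isSMulRegular_quotient_sup_span_pow (hy _ l (S.notMem_erase l)) ?_ n
    exact span_image_eq_sup_of_mem hlS y ▸ hy S j hj
  · rw [himage S hlS]
    obtain rfl | hjl := eq_or_ne j l
    · simpa using (hy S j hj).pow n
    · simpa [hjl] using hy S j hj

theorem isSMulRegular_quotient_span_pow (hy : IsPermutablyRegular M y) (n : ι → ℕ) {S : Finset ι}
    {j : ι} (hj : j ∉ S) :
    IsSMulRegular (M ⧸ (Ideal.span ((fun l ↦ y l ^ n l) '' S) • ⊤ : Submodule A M)) (y j) := by
  classical
  have hpiecewise (U : Finset ι) :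
      IsPermutablyRegular M (U.piecewise (fun l ↦ y l ^ n l) y) := by
    induction U using Finset.induction_on with
    | empty => simpa using hy
    | insert l U hl ih =>
      rw [Finset.piecewise_insert]
      simpa [hl] using ih.update_pow l (n l)
  have himage : S.piecewise (fun l ↦ y l ^ n l) y '' S = (fun l ↦ y l ^ n l) '' S :=
    Set.image_congr fun l hl ↦ Finset.piecewise_eq_of_mem _ _ _ hl
  have h := hpiecewise S S j hj
  rwa [himage, Finset.piecewise_eq_of_notMem _ _ _ hj] at h

theorem ne_zero [Nontrivial A] (hy : IsPermutablyRegular A y) (j : ι) : y j ≠ 0 := by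
  intro h0
  have h := mem_of_isSMulRegular_quotient_of_smul_mem (x := (1 : A)) (hy ∅ j (by simp))
    (by simp [h0])
  simp at h

theorem isWeaklyRegular_ofFn {h : ℕ} {y : Fin h → A} (hy : IsPermutablyRegular M y) :
    IsWeaklyRegular M (List.ofFn y) := by
  rw [isWeaklyRegular_iff]
  intro i hi
  have hspan : Ideal.ofList ((List.ofFn y).take i) =
      Ideal.span (y '' ↑(Finset.univ.filter fun j : Fin h ↦ j.1 < i)) := by
    refine congrArg Ideal.span (Set.ext fun a ↦ ?_)
    simp only [Set.mem_ofPred_eq, List.mem_take_iff_getElem, List.length_ofFn, List.getElem_ofFn,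
      lt_inf_iff, Set.mem_image, Finset.coe_filter, Finset.mem_univ, true_and, Fin.exists_iff]
    grind
  rw [hspan, List.getElem_ofFn]
  exact hy _ _ (by simp)

theorem of_isWeaklyRegular_ofFn [IsLocalRing A] [IsNoetherianRing A] {h : ℕ} {y : Fin h → A}
    (hm : ∀ i, y i ∈ maximalIdeal A) (hy : IsWeaklyRegular A (List.ofFn y)) :
    IsPermutablyRegular A y := by
  intro S j hj
  have hnodup : (S.toList ++ [j]).Nodup := by
    simp only [List.nodup_append, S.nodup_toList, List.nodup_singleton, true_and]
    rintro a ha b hb rfl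
    exact hj (by simp_all)
  obtain ⟨l, hl, hsub⟩ := hnodup.subperm (l₂ := List.finRange h) fun i _ ↦ List.mem_finRange i
  obtain ⟨rest, hrest⟩ := hsub.exists_perm_append
  have hperm : IsWeaklyRegular A (((S.toList ++ [j]) ++ rest).map y) := by
    refine isWeaklyRegular_of_perm_of_subset_maximalIdeal hy ?_ (by simpa using hm)
    exact List.ofFn_eq_map ▸ (hrest.trans (hl.append_right rest)).map y
  have hspan : Ideal.ofList (S.toList.map y) = Ideal.span (y '' S) :=
    congrArg Ideal.span (Set.ext fun a ↦ by simp)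
  rw [List.map_append, List.map_append, isWeaklyRegular_append_iff, isWeaklyRegular_append_iff,
    List.map_singleton, isWeaklyRegular_singleton_iff, hspan] at hperm
  exact hperm.1.2

end IsPermutablyRegular

end PermutableRegularity

section FreeFactorization

variable {A : Type*} [CommRing A] {M : Type*} [AddCommGroup M] [Module A M]

/-- The ideal of all `a : A` such that `a • g` factors through a finite free module. It measures
how far `g` is from factoring through a finite free module itself, as every map from a finitely
presented module to a flat one does. -/
def freeFactorIdeal {V : Type*} [AddCommGroup V] [Module A V] (g : V →ₗ[A] M) : Ideal A :=
  (Submodule.span A (Set.range fun fm : (V →ₗ[A] A) × M ↦ fm.1.smulRight fm.2)).comap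
    (LinearMap.toSpanSingleton A (V →ₗ[A] M) g)

theorem exists_comp_eq_smul_of_mem_freeFactorIdeal {V : Type*} [AddCommGroup V] [Module A V]
    {g : V →ₗ[A] M} {a : A} (ha : a ∈ freeFactorIdeal g) :
    ∃ (k : ℕ) (φ : V →ₗ[A] (Fin k → A)) (ψ : (Fin k → A) →ₗ[A] M), ψ ∘ₗ φ = a • g := by
  obtain ⟨k, c, h, hsum⟩ := Submodule.mem_span_set'.mp ha
  choose fm hfm using fun i ↦ (h i).2
  refine ⟨k, LinearMap.pi fun i ↦ (fm i).1, Fintype.linearCombination A fun i ↦ c i • (fm i).2, ?_⟩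
  rw [LinearMap.toSpanSingleton_apply] at hsum
  rw [← hsum]
  ext v
  simp only [LinearMap.comp_apply, Fintype.linearCombination_apply, LinearMap.pi_apply,
    LinearMap.sum_apply, LinearMap.smul_apply, ← hfm, LinearMap.smulRight_apply, smul_comm (c _)]

theorem exists_mem_range_sub_smul_mem {V : Submodule A M} {F : Type*} [AddCommGroup F] [Module A F]
    {φ : V →ₗ[A] F} {ψ : F →ₗ[A] M} {J : Ideal A} {s t : A} {N n : ℕ} (hNn : N ≤ n)
    (hψφ : ψ ∘ₗ φ = t ^ N • V.subtype)
    (hsF : IsSMulRegular (F ⧸ ((J ⊔ Ideal.span {t ^ n}) • ⊤ : Submodule A F)) s)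
    (htF : IsSMulRegular (F ⧸ (J • ⊤ : Submodule A F)) t)
    (htM : IsSMulRegular (M ⧸ (J • ⊤ : Submodule A M)) t)
    {w : M} (hw : w ∈ V) (hsw : s • w ∈ (J ⊔ Ideal.span {t ^ n}) • V) :
    ∃ w' ∈ LinearMap.range ψ, w - t ^ (n - N) • w' ∈ J • (⊤ : Submodule A M) ∧
      s • w' ∈ (J ⊔ Ideal.span {t ^ N}) • (V ⊔ LinearMap.range ψ) := by
  have hψφ' (v : V) : ψ (φ v) = t ^ N • (v : M) := LinearMap.congr_fun hψφ v
  have hsw' : s • (⟨w, hw⟩ : V) ∈ (J ⊔ Ideal.span {t ^ n}) • (⊤ : Submodule A V) :=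
    (Submodule.mem_smul_top_iff _ V _).mpr hsw
  obtain ⟨u, hu, z, -, huz⟩ := mem_sup_span_singleton_smul_iff.mp hsw'
  have hφw : φ ⟨w, hw⟩ ∈ (J ⊔ Ideal.span {t ^ n}) • (⊤ : Submodule A F) := by
    refine mem_of_isSMulRegular_quotient_of_smul_mem hsF ?_
    rw [← map_smul]
    exact Submodule.smul_top_le_comap_smul_top _ φ hsw'
  obtain ⟨v, hv, f, -, hvf⟩ := mem_sup_span_singleton_smul_iff.mp hφw
  refine ⟨ψ f, ⟨f, rfl⟩, ?_, mem_sup_span_singleton_smul_iff.mpr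
    ⟨s • ψ f - t ^ N • (z : M), ?_, z, Submodule.mem_sup_left z.2, sub_add_cancel _ _⟩⟩
  · refine mem_of_isSMulRegular_quotient_of_smul_mem (htM.pow N) ?_
    have hψv : t ^ N • (w - t ^ (n - N) • ψ f) = ψ v := by
      rw [smul_sub, smul_smul, ← pow_add, Nat.add_sub_cancel' hNn, ← hψφ' ⟨w, hw⟩, ← hvf, map_add,
        map_smul, add_sub_cancel_right]
    exact hψv ▸ Submodule.smul_top_le_comap_smul_top _ ψ hv
  · have hsf : s • f - φ z ∈ J • (⊤ : Submodule A F) := by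
      refine mem_of_isSMulRegular_quotient_of_smul_mem (htF.pow n) ?_
      have hφu : t ^ n • (s • f - φ z) = φ u - s • v := by
        have h := congrArg φ huz
        rw [map_smul, ← hvf, map_add, map_smul, smul_add] at h
        rw [smul_sub, smul_comm, sub_eq_sub_iff_add_eq_add, h, add_comm]
      exact hφu ▸ sub_mem (Submodule.smul_top_le_comap_smul_top _ φ hu) (Submodule.smul_mem _ _ hv)
    rw [← hψφ' z, ← map_smul, ← map_sub]
    refine Submodule.smul_mono le_rfl le_sup_right ?_
    rw [LinearMap.range_eq_map, ← Submodule.map_smul'']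
    exact Submodule.mem_map_of_mem hsf

theorem exists_fg_forall_exists_sub_pow_smul_mem {V : Submodule A M} (hV : V.FG) {t : A}
    (ht : t ∈ (freeFactorIdeal V.subtype).radical) :
    ∃ V' : Submodule A M, V'.FG ∧ ∃ N₀ : ℕ, ∀ N ≥ N₀, ∀ q ≥ N, ∀ (J : Ideal A) (s : A),
      IsSMulRegular (A ⧸ ((J ⊔ Ideal.span {t ^ q}) • ⊤ : Submodule A A)) s →
      IsSMulRegular (A ⧸ (J • ⊤ : Submodule A A)) t →
      IsSMulRegular (M ⧸ (J • ⊤ : Submodule A M)) t →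
      ∀ w ∈ V, s • w ∈ (J ⊔ Ideal.span {t ^ q}) • V → ∃ w' ∈ V',
        w - t ^ (q - N) • w' ∈ J • (⊤ : Submodule A M) ∧
        s • w' ∈ (J ⊔ Ideal.span {t ^ N}) • V' := by
  obtain ⟨N₀, hN₀⟩ := ht
  obtain ⟨k, φ, ψ, hψφ⟩ := exists_comp_eq_smul_of_mem_freeFactorIdeal hN₀
  refine ⟨V ⊔ LinearMap.range ψ, hV.sup (LinearMap.range_eq_map ψ ▸ Module.Finite.fg_top.map ψ),
    N₀, fun N hN q hq J s hsA htA htM w hw hsw ↦ ?_⟩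
  have hψφN : (t ^ (N - N₀) • ψ) ∘ₗ φ = t ^ N • V.subtype := by
    rw [LinearMap.smul_comp, hψφ, smul_smul, ← pow_add, Nat.sub_add_cancel hN]
  have hrange : LinearMap.range (t ^ (N - N₀) • ψ) ≤ LinearMap.range ψ := by
    rintro _ ⟨f, rfl⟩
    exact Submodule.smul_mem _ _ ⟨f, rfl⟩
  obtain ⟨w', hw', hww', hsw'⟩ := exists_mem_range_sub_smul_mem hq hψφN
    (isSMulRegular_quotient_smul_top_of_flat hsA (Fin k → A))
    (isSMulRegular_quotient_smul_top_of_flat htA (Fin k → A)) htM hw hsw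
  exact ⟨w', Submodule.mem_sup_right (hrange hw'), hww',
    Submodule.smul_mono le_rfl (sup_le_sup_left hrange V) hsw'⟩

theorem prod_pow_mul_mem_span_pow {ι : Type*} [DecidableEq ι] {U S : Finset ι} (y : ι → A)
    {N q : ℕ} (hNq : N ≤ q) {l : ι} (hl : l ∈ S) :
    (∏ k ∈ U, y k) ^ (q - N) * y l ^ (if l ∈ U then N else q) ∈
      Ideal.span ((fun k ↦ y k ^ q) '' S) := by
  refine Ideal.mem_of_dvd _ ?_ (Ideal.subset_span ⟨l, hl, rfl⟩)
  split_ifs with hlU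
  · calc y l ^ q = y l ^ (q - N) * y l ^ N := by rw [← pow_add, Nat.sub_add_cancel hNq]
      _ ∣ _ := mul_dvd_mul_right (pow_dvd_pow_of_dvd (Finset.dvd_prod_of_mem y hlU) _) _
  · exact dvd_mul_left _ _

theorem prod_pow_smul_mem_span_pow_smul_top {ι : Type*} [DecidableEq ι] {U S : Finset ι}
    (y : ι → A) {N q : ℕ} (hNq : N ≤ q) {w : M}
    (hw : w ∈ Ideal.span ((fun k ↦ y k ^ if k ∈ U then N else q) '' S) • (⊤ : Submodule A M)) :
    (∏ k ∈ U, y k) ^ (q - N) • w ∈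
      Ideal.span ((fun k ↦ y k ^ q) '' S) • (⊤ : Submodule A M) := by
  have hle : Ideal.span {(∏ k ∈ U, y k) ^ (q - N)} *
      Ideal.span ((fun k ↦ y k ^ if k ∈ U then N else q) '' S) ≤
        Ideal.span ((fun k ↦ y k ^ q) '' S) := by
    rw [Ideal.span_mul_span', Ideal.span_le]
    rintro _ ⟨_, rfl, _, ⟨l, hl, rfl⟩, rfl⟩
    exact prod_pow_mul_mem_span_pow y hNq hl
  refine Submodule.smul_mono_left hle ?_
  rw [Submodule.mul_smul]
  exact Submodule.smul_mem_smul (Ideal.mem_span_singleton_self _) hw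

/-- For `U = S` this says that an element `w` of `V` whose multiple `s • w` vanishes modulo the
`q`-th powers of the `y l` agrees, modulo these powers, with `(∏ y l) ^ (q - N)` times an element of
a finitely generated module that does not depend on `q`. -/
theorem exists_fg_forall_exists_sub_prod_pow_smul_mem {ι : Type*} [DecidableEq ι] {y : ι → A}
    (hA : IsPermutablyRegular A y) {S : Finset ι}
    (hM : ∀ n : ι → ℕ, ∀ l ∈ S, IsSMulRegular
      (M ⧸ (Ideal.span ((fun k ↦ y k ^ n k) '' ↑(S.erase l)) • ⊤ : Submodule A M)) (y l))
    (hfac : ∀ V : Submodule A M, V.FG → ∀ l ∈ S, y l ∈ (freeFactorIdeal V.subtype).radical)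
    {V : Submodule A M} (hV : V.FG) {U : Finset ι} (hU : U ⊆ S) :
    ∃ V' : Submodule A M, V'.FG ∧ ∃ N₀ : ℕ, ∀ N ≥ N₀, ∀ q ≥ N, ∀ s : A,
      (∀ n : ι → ℕ, IsSMulRegular
        (A ⧸ (Ideal.span ((fun k ↦ y k ^ n k) '' S) • ⊤ : Submodule A A)) s) →
      ∀ w ∈ V, s • w ∈ Ideal.span ((fun k ↦ y k ^ q) '' S) • V → ∃ w' ∈ V',
        w - (∏ l ∈ U, y l) ^ (q - N) • w' ∈
          (Ideal.span ((fun k ↦ y k ^ q) '' S) • ⊤ : Submodule A M) ∧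
        s • w' ∈ Ideal.span ((fun k ↦ y k ^ if k ∈ U then N else q) '' S) • V' := by
  induction U using Finset.induction_on with
  | empty => exact ⟨V, hV, 0, fun N _ q _ s _ w hw hsw ↦ ⟨w, hw, by simp, by simpa using hsw⟩⟩
  | insert l U hlU ih =>
    obtain ⟨V₁, hV₁, N₁, h₁⟩ := ih ((Finset.subset_insert _ _).trans hU)
    have hl : l ∈ S := hU (Finset.mem_insert_self l U)
    obtain ⟨V₂, hV₂, N₂, h₂⟩ := exists_fg_forall_exists_sub_pow_smul_mem hV₁ (hfac V₁ hV₁ l hl)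
    refine ⟨V₂, hV₂, max N₁ N₂, fun N hN q hq s hs w hw hsw ↦ ?_⟩
    obtain ⟨w₁, hw₁, hww₁, hsw₁⟩ := h₁ N (le_of_max_le_left hN) q hq s hs w hw hsw
    let n : ι → ℕ := fun k ↦ if k ∈ U then N else q
    let J := Ideal.span ((fun k ↦ y k ^ n k) '' ↑(S.erase l))
    have hJq : Ideal.span ((fun k ↦ y k ^ n k) '' S) = J ⊔ Ideal.span {y l ^ q} := by
      rw [span_image_eq_sup_of_mem hl, show n l = q from if_neg hlU]
    have hJN : Ideal.span ((fun k ↦ y k ^ if k ∈ insert l U then N else q) '' S) =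
        J ⊔ Ideal.span {y l ^ N} := by
      rw [span_image_eq_sup_of_mem hl, if_pos (Finset.mem_insert_self l U)]
      congr 2
      refine Set.image_congr fun k hk ↦ ?_
      simp [n, Finset.ne_of_mem_erase hk]
    obtain ⟨w₂, hw₂, hw₁w₂, hsw₂⟩ := h₂ N (le_of_max_le_right hN) q hq J s (hJq ▸ hs n)
      (hA.isSMulRegular_quotient_span_pow n (S.notMem_erase l)) (hM n l hl) w₁ hw₁ (hJq ▸ hsw₁)
    refine ⟨w₂, hw₂, ?_, hJN ▸ hsw₂⟩
    rw [← sub_add_sub_cancel w ((∏ k ∈ U, y k) ^ (q - N) • w₁), Finset.prod_insert hlU, mul_comm,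
      mul_pow, mul_smul, ← smul_sub]
    refine add_mem hww₁ (prod_pow_smul_mem_span_pow_smul_top y hq ?_)
    exact hJq ▸ Submodule.smul_mono_left le_sup_left hw₁w₂

end FreeFactorization

section IntegralExtension

theorem exists_eq_sum_Ico_smul {A M : Type*} [CommRing A] [IsNoetherianRing A] [AddCommGroup M]
    [Module A M] {V : Submodule A M} (hV : V.FG) {s : ℕ → M} (hs : ∀ i, s i ∈ V) (e : ℕ) :
    ∃ E ≥ e, ∃ a : ℕ → A, s E = ∑ i ∈ Finset.Ico e E, a i • s i := by
  have : Module.Finite A V := Module.Finite.iff_fg.mpr hV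
  let W : ℕ →o Submodule A V :=
    { toFun := fun n ↦ Submodule.span A ((fun i ↦ (⟨s i, hs i⟩ : V)) '' ↑(Finset.Ico e n))
      monotone' := fun m n hmn ↦ Submodule.span_mono (Set.image_mono (by
        exact_mod_cast Finset.Ico_subset_Ico_right hmn)) }
  obtain ⟨n, hn⟩ := monotone_stabilizes_iff_noetherian.mpr (inferInstance : IsNoetherian A V) W
  have hmem : (⟨s (max e n), hs _⟩ : V) ∈ W (max e n) := by
    rw [← hn _ (le_max_right e n), hn _ ((le_max_right e n).trans (Nat.le_succ _))]
    exact Submodule.subset_span ⟨max e n, by simp, rfl⟩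
  obtain ⟨a, ha⟩ := (Submodule.mem_span_image_finset_iff_exists_fun' A).mp hmem
  exact ⟨max e n, le_max_left e n, a, by simpa using (congrArg Subtype.val ha).symm⟩

variable {A M : Type*} [CommRing A] [CommRing M] [Algebra A M] {p : ℕ} {ι : Type*}
  {y : ι → A} {S : Finset ι} {j : ι} {r : M}

theorem mem_span_image_smul_top_iff :
    r ∈ Ideal.span (y '' S) • (⊤ : Submodule A M) ↔ ∃ z : ι → M, ∑ l ∈ S, y l • z l = r := by
  rw [Ideal.smul_top_eq_map, Submodule.restrictScalars_mem, Ideal.map_span, ← Set.image_comp,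
    Submodule.mem_span_image_finset_iff_exists_fun']
  simp only [Function.comp_apply, smul_eq_mul, Algebra.smul_def, mul_comm]

theorem exists_fg_forall_exists_pow_sub_prod_pow_smul_mem [DecidableEq ι]
    [Algebra.IsIntegral A M] [Fact p.Prime] [CharP M p] (hA : IsPermutablyRegular A y)
    (hfac : ∀ V : Submodule A M, V.FG → ∀ l, y l ∈ (freeFactorIdeal V.subtype).radical)
    (hM : ∀ n : ι → ℕ, ∀ l ∈ S, IsSMulRegular
      (M ⧸ (Ideal.span ((fun k ↦ y k ^ n k) '' ↑(S.erase l)) • ⊤ : Submodule A M)) (y l))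
    (hj : j ∉ S) (hr : y j • r ∈ Ideal.span (y '' S) • (⊤ : Submodule A M)) :
    ∃ V : Submodule A M, V.FG ∧ ∃ e₀ : ℕ, ∀ e ≥ e₀, ∃ s ∈ V,
      r ^ p ^ e - (∏ l ∈ S, y l) ^ (p ^ e - p ^ e₀) • s ∈
        Ideal.span ((fun l ↦ y l ^ p ^ e) '' S) • (⊤ : Submodule A M) := by
  obtain ⟨z, hz⟩ := mem_span_image_smul_top_iff.mp hr
  let B := Algebra.adjoin A (insert r (z '' S))
  have hB : B.toSubmodule.FG := fg_adjoin_of_finite ((S.finite_toSet.image z).insert r)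
    fun b _ ↦ Algebra.IsIntegral.isIntegral b
  obtain ⟨V, hV, N₀, h⟩ := exists_fg_forall_exists_sub_prod_pow_smul_mem hA hM
    (fun V hV l _ ↦ hfac V hV l) hB subset_rfl
  refine ⟨V, hV, N₀, fun e he ↦ ?_⟩
  have hp : 1 < p := (Fact.out : p.Prime).one_lt
  have hrB : r ∈ B := Algebra.subset_adjoin (Set.mem_insert _ _)
  have hzB (l) (hl : l ∈ S) : z l ∈ B := Algebra.subset_adjoin (.inr ⟨l, hl, rfl⟩)
  have hsmul : y j ^ p ^ e • r ^ p ^ e ∈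
      Ideal.span ((fun l ↦ y l ^ p ^ e) '' S) • B.toSubmodule := by
    have : ExpChar M p := .prime Fact.out
    rw [← smul_pow, ← hz, sum_pow_char_pow]
    refine sum_mem fun l hl ↦ ?_
    rw [smul_pow]
    exact Submodule.smul_mem_smul (Ideal.subset_span ⟨l, hl, rfl⟩) (pow_mem (hzB l hl) _)
  obtain ⟨s, hs, hrs, -⟩ := h (p ^ N₀) (Nat.lt_pow_self hp).le (p ^ e)
    (Nat.pow_le_pow_right hp.le he) (y j ^ p ^ e)
    (fun n ↦ (hA.isSMulRegular_quotient_span_pow n hj).pow _) _ (pow_mem hrB _) hsmul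
  exact ⟨s, hs, hrs⟩

theorem exists_pow_sub_sum_mem_span_pow_smul_top [DecidableEq ι] [IsNoetherianRing A]
    [Algebra.IsIntegral A M] [Fact p.Prime] [CharP M p] (hA : IsPermutablyRegular A y)
    (hfac : ∀ V : Submodule A M, V.FG → ∀ l, y l ∈ (freeFactorIdeal V.subtype).radical)
    (hM : ∀ n : ι → ℕ, ∀ l ∈ S, IsSMulRegular
      (M ⧸ (Ideal.span ((fun k ↦ y k ^ n k) '' ↑(S.erase l)) • ⊤ : Submodule A M)) (y l))
    (hj : j ∉ S) (hr : y j • r ∈ Ideal.span (y '' S) • (⊤ : Submodule A M)) :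
    ∃ (e E : ℕ) (a : ℕ → A),
      r ^ p ^ E - ∑ i ∈ Finset.Ico e E, (a i * (∏ l ∈ S, y l) ^ (p ^ E - p ^ i)) • r ^ p ^ i ∈
        Ideal.span ((fun l ↦ y l ^ p ^ E) '' S) • (⊤ : Submodule A M) := by
  obtain ⟨V, hV, e, h⟩ :=
    exists_fg_forall_exists_pow_sub_prod_pow_smul_mem (p := p) hA hfac hM hj hr
  choose s hsV hs using fun i ↦ h (max e i) (le_max_left e i)
  obtain ⟨E, heE, a, hE⟩ := exists_eq_sum_Ico_smul hV hsV e
  set Y := ∏ l ∈ S, y l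
  refine ⟨e, E, a, ?_⟩
  have hpow {i k : ℕ} (hik : i ≤ k) : p ^ i ≤ p ^ k :=
    Nat.pow_le_pow_right (Fact.out : p.Prime).pos hik
  have hterm (i) (hi : i ∈ Finset.Ico e E) :
      a i • Y ^ (p ^ E - p ^ i) • (r ^ p ^ i - Y ^ (p ^ i - p ^ e) • s i) ∈
        Ideal.span ((fun l ↦ y l ^ p ^ E) '' S) • (⊤ : Submodule A M) := by
    obtain ⟨hei, hiE⟩ := Finset.mem_Ico.mp hi
    have hsi := hs i
    rw [max_eq_right hei] at hsi
    refine Submodule.smul_mem _ _ (prod_pow_smul_mem_span_pow_smul_top y (hpow hiE.le) ?_)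
    rwa [Set.image_congr fun l hl ↦ by rw [if_pos (Finset.mem_coe.mp hl)]]
  have hsE := hs E
  rw [max_eq_right heE, hE] at hsE
  convert sub_mem hsE (sum_mem hterm) using 1
  rw [sub_sub, Finset.smul_sum, ← Finset.sum_add_distrib]
  congr 1
  refine Finset.sum_congr rfl fun i hi ↦ ?_
  obtain ⟨hei, hiE⟩ := Finset.mem_Ico.mp hi
  rw [smul_sub, smul_sub, mul_smul, smul_smul (Y ^ (p ^ E - p ^ i)), ← pow_add,
    Nat.sub_add_sub_cancel (hpow hiE.le) (hpow hei), smul_comm (a i) _ (s i), add_sub_cancel]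

theorem isSMulRegular_quotient_span_smul_top [DecidableEq ι] [IsNoetherianRing A]
    [Algebra.IsIntegral A M] [IsDomain M] [FaithfulSMul A M] (L : Type*) [Field L]
    [IsAlgClosed L] [Algebra M L] [IsIntegrallyClosedIn M L] [Fact p.Prime] [CharP M p]
    (hA : IsPermutablyRegular A y)
    (hfac : ∀ V : Submodule A M, V.FG → ∀ l, y l ∈ (freeFactorIdeal V.subtype).radical)
    (hM : ∀ n : ι → ℕ, ∀ l ∈ S, IsSMulRegular
      (M ⧸ (Ideal.span ((fun k ↦ y k ^ n k) '' ↑(S.erase l)) • ⊤ : Submodule A M)) (y l))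
    (hj : j ∉ S) : IsSMulRegular (M ⧸ (Ideal.span (y '' S) • ⊤ : Submodule A M)) (y j) := by
  have hinj := FaithfulSMul.algebraMap_injective A M
  have hy (l : ι) : algebraMap A M (y l) ≠ 0 := by
    have := (algebraMap A M).domain_nontrivial
    exact (map_ne_zero_iff _ hinj).mpr (hA.ne_zero l)
  obtain rfl | hS := S.eq_empty_or_nonempty
  · rw [isSMulRegular_quotient_iff_mem_of_smul_mem]
    intro r hr
    rw [mem_span_image_smul_top_iff] at hr ⊢
    simpa [Algebra.smul_def, hy, eq_comm] using hr
  rw [isSMulRegular_quotient_iff_mem_of_smul_mem]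
  intro r hr
  obtain ⟨e, E, a, h⟩ := exists_pow_sub_sum_mem_span_pow_smul_top (p := p) hA hfac hM hj hr
  have hp : 1 < p := (Fact.out : p.Prime).one_lt
  rw [Ideal.smul_top_eq_map, Submodule.restrictScalars_mem, Ideal.map_span, ← Set.image_comp] at h ⊢
  refine mem_span_of_eval_scaleRoots_mem_span L
    (monic_pPolynomial hp e E fun i ↦ algebraMap A M (a i))
    (exists_eq_pow_of_mem_support_pPolynomial _ _ _) hS (fun l _ ↦ hy l) ?_
  rw [eval_scaleRoots_pPolynomial hp, natDegree_pPolynomial hp]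
  simpa [Algebra.smul_def, Function.comp_def, Pi.pow_def] using h

theorem IsPermutablyRegular.of_isIntegral [IsNoetherianRing A] [Algebra.IsIntegral A M]
    [IsDomain M] [FaithfulSMul A M] (L : Type*) [Field L] [IsAlgClosed L] [Algebra M L]
    [IsIntegrallyClosedIn M L] (p : ℕ) [Fact p.Prime] [CharP M p]
    (hA : IsPermutablyRegular A y)
    (hfac : ∀ V : Submodule A M, V.FG → ∀ l, y l ∈ (freeFactorIdeal V.subtype).radical) :
    IsPermutablyRegular M y := by
  classical
  intro S
  induction S using Finset.strongInduction with
  | H S ih =>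
    have himage (f : ι → A) (U : Finset S) :
        f '' ↑(U.map (.subtype (· ∈ S))) = (fun l : S ↦ f l) '' U := by
      rw [Finset.coe_map, Set.image_image]
      rfl
    have hS : IsPermutablyRegular M (fun l : S ↦ y l) := by
      intro U l hl
      have hlU : (l : ι) ∉ U.map (.subtype (· ∈ S)) := by simpa using hl
      rw [← himage]
      exact ih _ (Finset.ssubset_iff_of_subset (Finset.map_subtype_subset U) |>.mpr
        ⟨l, l.2, hlU⟩) l hlU
    refine fun j hj ↦ isSMulRegular_quotient_span_smul_top L (p := p) hA hfac ?_ hj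
    intro n l hl
    have h := hS.isSMulRegular_quotient_span_pow (fun k ↦ n k)
      (Finset.notMem_erase ⟨l, hl⟩ Finset.univ)
    have herase : (Finset.univ.erase (⟨l, hl⟩ : S)).map (.subtype (· ∈ S)) = S.erase l := by
      ext k
      simp [and_comm]
    rwa [← himage fun k ↦ y k ^ n k, herase] at h

end IntegralExtension

section ShortExact

open RingTheory.Sequence

variable {A : Type*} [CommRing A] {Z G N K' F K : Type*} [AddCommGroup Z] [AddCommGroup G]
  [AddCommGroup N] [AddCommGroup K'] [AddCommGroup F] [AddCommGroup K] [Module A Z] [Module A G]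
  [Module A N] [Module A K'] [Module A F] [Module A K]
  {i : Z →ₗ[A] G} {q : G →ₗ[A] N} {f : K' →ₗ[A] F} {g : F →ₗ[A] K}

theorem lTensor_rTensor_comm (i : Z →ₗ[A] G) (f : K' →ₗ[A] F) (u : Z ⊗[A] K') :
    f.lTensor G (i.rTensor K' u) = i.rTensor F (f.lTensor Z u) := by
  rw [← LinearMap.comp_apply, ← LinearMap.comp_apply, LinearMap.lTensor_comp_rTensor,
    LinearMap.rTensor_comp_lTensor]

/-- The connecting map of the snake lemma embeds `ker (N ⊗ K' → N ⊗ F)` into `Z ⊗ K`; `ζ` is the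
image of `τ`. -/
theorem exists_rTensor_eq_zero_of_lTensor_eq_zero [Module.Flat A G] (hiq : Function.Exact i q)
    (hq : Function.Surjective q) (hf : Function.Injective f) (hfg : Function.Exact f g)
    (hg : Function.Surjective g) {τ : N ⊗[A] K'} (hτ : f.lTensor N τ = 0) :
    ∃ ζ : Z ⊗[A] K, i.rTensor K ζ = 0 ∧ ∀ a : A, a • ζ = 0 → a • τ = 0 := by
  obtain ⟨t, rfl⟩ := LinearMap.rTensor_surjective K' hq τ
  obtain ⟨w, hw⟩ := (rTensor_exact F hiq hq (f.lTensor G t)).mp (by rw [← lTensor_rTensor_comm, hτ])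
  refine ⟨g.lTensor Z w, ?_, fun a ha ↦ ?_⟩
  · rw [← lTensor_rTensor_comm, hw]
    exact (lTensor_exact G hfg hg).apply_apply_eq_zero t
  · rw [← map_smul] at ha
    obtain ⟨u, hu⟩ := (lTensor_exact Z hfg hg _).mp ha
    have hut : i.rTensor K' u = a • t := by
      apply Module.Flat.lTensor_preserves_injective_linearMap (M := G) f hf
      rw [lTensor_rTensor_comm, hu, map_smul, map_smul, hw]
    rw [← map_smul, ← hut]
    exact (rTensor_exact K' hiq hq).apply_apply_eq_zero u

theorem flat_of_forall_lTensor_quotient_injective [Module.Flat A F] (hfg : Function.Exact f g)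
    (hg : Function.Surjective g) (h : ∀ I : Ideal A, Function.Injective (f.lTensor (A ⧸ I))) :
    Module.Flat A K :=
  Module.Flat.iff_lTensor_injective'.mpr fun I ↦
    lTensor_injective_of_exact_of_exact_of_rTensor_injective hfg hg
      (LinearMap.exact_subtype_mkQ I) I.mkQ_surjective
      ((LinearMap.lTensor_inj_iff_rTensor_inj _ _).mp (h I))
      (Module.Flat.lTensor_preserves_injective_linearMap _ I.subtype_injective)

theorem mapQ_quotTensorEquivQuotSMul (I : Ideal A) (f : K' →ₗ[A] F) (τ : (A ⧸ I) ⊗[A] K') :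
    Submodule.mapQ _ _ f (Submodule.smul_top_le_comap_smul_top I f)
      (TensorProduct.quotTensorEquivQuotSMul K' I τ) =
    TensorProduct.quotTensorEquivQuotSMul F I (f.lTensor _ τ) := by
  induction τ with
  | zero => simp
  | add x y hx hy => simp only [map_add, hx, hy]
  | tmul x y =>
    obtain ⟨x, rfl⟩ := Submodule.mkQ_surjective _ x
    simp [Submodule.mapQ_apply]

theorem lTensor_quotient_ofList_injective (hf : Function.Injective f) (hfg : Function.Exact f g)
    (hg : Function.Surjective g) {ys : List A} (hys : IsWeaklyRegular K ys) :
    Function.Injective (f.lTensor (A ⧸ Ideal.ofList ys)) := by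
  have hzero : Function.Exact (0 : PUnit →ₗ[A] K') f :=
    (LinearMap.exact_zero_iff_injective _ _).mpr hf
  have hexact := map_first_exact_on_four_term_right_exact_of_isSMulRegular_last hzero hfg hg hys
  have hmapQ := (LinearMap.exact_zero_iff_injective (PUnit ⧸ (Ideal.ofList ys • ⊤ : Submodule A _))
    _).mp (by rwa [Submodule.mapQ_zero] at hexact)
  refine (injective_iff_map_eq_zero _).mpr fun τ hτ ↦ ?_
  rw [← (TensorProduct.quotTensorEquivQuotSMul K' (Ideal.ofList ys)).map_eq_zero_iff,
    ← map_eq_zero_iff _ hmapQ, mapQ_quotTensorEquivQuotSMul, hτ, map_zero]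

theorem isWeaklyRegular_of_flat {ys : List A} (hA : IsWeaklyRegular A ys) (F : Type*)
    [AddCommGroup F] [Module A F] [Module.Flat A F] : IsWeaklyRegular F ys :=
  ((TensorProduct.lid A F).isWeaklyRegular_congr ys).mp hA.isWeaklyRegular_rTensor

theorem quotSMulTopMap_injective {a : A} (hf : Function.Injective f) (hfg : Function.Exact f g)
    (ha : IsSMulRegular K a) : Function.Injective (QuotSMulTop.map a f) := by
  refine (injective_iff_map_eq_zero _).mpr fun z hz ↦ ?_
  obtain ⟨z, rfl⟩ := Submodule.Quotient.mk_surjective _ z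
  rw [QuotSMulTop.map_apply_mk, Submodule.Quotient.mk_eq_zero] at hz
  obtain ⟨w, -, hw⟩ := (Submodule.mem_smul_pointwise_iff_exists _ _ _).mp hz
  have hgw : g w = 0 := ha <| by
    simp only [smul_zero, ← map_smul, hw, hfg.apply_apply_eq_zero]
  obtain ⟨z', rfl⟩ := (hfg w).mp hgw
  rw [Submodule.Quotient.mk_eq_zero]
  exact (Submodule.mem_smul_pointwise_iff_exists _ _ _).mpr ⟨z', trivial, hf (by simpa using hw)⟩

theorem isWeaklyRegular_of_isWeaklyRegular_take {ys : List A} :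
    ∀ {j : ℕ} {K' F K : Type*} [AddCommGroup K'] [AddCommGroup F] [AddCommGroup K]
      [Module A K'] [Module A F] [Module A K] {f : K' →ₗ[A] F} {g : F →ₗ[A] K},
      Function.Injective f → Function.Exact f g → Function.Surjective g → ys.length ≤ j + 1 →
      IsWeaklyRegular F ys → IsWeaklyRegular K (ys.take j) → IsWeaklyRegular K' ys := by
  induction ys with
  | nil => intros; exact .nil _ _
  | cons a ys ih =>
    intro j K' F K _ _ _ _ _ _ f g hf hfg hg hj hF hK
    rw [isWeaklyRegular_cons_iff] at hF ⊢
    refine ⟨hF.1.of_injective f hf, ?_⟩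
    cases j with
    | zero =>
      obtain rfl : ys = [] := by simpa using hj
      exact .nil _ _
    | succ j =>
      rw [List.take_succ_cons, isWeaklyRegular_cons_iff] at hK
      exact ih (quotSMulTopMap_injective hf hfg hK.1) (QuotSMulTop.map_exact a hfg hg)
        (QuotSMulTop.map_surjective a hg) (by simpa using hj) hF.2 hK.2

end ShortExact

section TorTorsion

variable {A : Type u} [CommRing A] {Z G N K' F K : Type u} [AddCommGroup Z] [AddCommGroup G]
  [AddCommGroup N] [AddCommGroup K'] [AddCommGroup F] [AddCommGroup K] [Module A Z] [Module A G]
  [Module A N] [Module A K'] [Module A F] [Module A K]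
  {i : Z →ₗ[A] G} {q : G →ₗ[A] N} {f : K' →ₗ[A] F} {g : F →ₗ[A] K}

/-- `Tor₁(N, K)` is `a`-power torsion: every element of the kernel of `N ⊗ K' → N ⊗ F` is killed by
a power of `a`, for every presentation `0 → K' → F → K → 0` of `K` with `F` flat. For `a = 1` this
says that `Tor₁(N, K)` vanishes. -/
def TorOneIsPowTorsion (a : A) (N K : Type u) [AddCommGroup N] [Module A N] [AddCommGroup K]
    [Module A K] : Prop :=
  ∀ (F K' : Type u) [AddCommGroup F] [Module A F] [AddCommGroup K'] [Module A K'] [Module.Flat A F]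
    (f : K' →ₗ[A] F) (g : F →ₗ[A] K), Function.Injective f → Function.Exact f g →
    Function.Surjective g → ∀ τ : N ⊗[A] K', f.lTensor N τ = 0 → ∃ n : ℕ, a ^ n • τ = 0

namespace TorOneIsPowTorsion

variable {a : A}

theorem syzygy [Module.Flat A G] [Module.Flat A F] (h : TorOneIsPowTorsion a Z K)
    (hi : Function.Injective i) (hiq : Function.Exact i q) (hq : Function.Surjective q)
    (hf : Function.Injective f) (hfg : Function.Exact f g) (hg : Function.Surjective g) :
    TorOneIsPowTorsion a N K' := by
  intro F' K'' _ _ _ _ _ f' g' hf' hfg' hg' τ hτ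
  obtain ⟨ζ, hζ, hann⟩ := exists_rTensor_eq_zero_of_lTensor_eq_zero hiq hq hf' hfg' hg' hτ
  obtain ⟨n, hn⟩ := h F K' f g hf hfg hg ζ <|
    (map_eq_zero_iff _ (Module.Flat.rTensor_preserves_injective_linearMap i hi)).mp <| by
      rw [← lTensor_rTensor_comm, hζ, map_zero]
  exact ⟨n, hann _ hn⟩

theorem of_flat [Module.Flat A N] (a : A) (K : Type u) [AddCommGroup K] [Module A K] :
    TorOneIsPowTorsion a N K := fun _ _ _ _ _ _ _ f _ hf _ _ τ hτ ↦
  ⟨0, by rw [(map_eq_zero_iff _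
    (Module.Flat.lTensor_preserves_injective_linearMap f hf)).mp hτ, smul_zero]⟩

theorem lTensor_injective [Module.Flat A F] (h : TorOneIsPowTorsion (1 : A) N K)
    (hf : Function.Injective f) (hfg : Function.Exact f g) (hg : Function.Surjective g) :
    Function.Injective (f.lTensor N) := by
  refine (injective_iff_map_eq_zero _).mpr fun τ hτ ↦ ?_
  obtain ⟨n, hn⟩ := h F K' f g hf hfg hg τ hτ
  simpa using hn

theorem of_mem_radical_freeFactorIdeal [Module.Finite A N]
    (h : ∀ V : Submodule A K, V.FG → a ∈ (freeFactorIdeal V.subtype).radical) :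
    TorOneIsPowTorsion a N K := by
  intro F K' _ _ _ _ _ f g hf hfg hg τ hτ
  obtain ⟨r, q, hq⟩ := Module.Finite.exists_fin' A N
  set i := (LinearMap.ker q).subtype
  have hi : Function.Injective i := Subtype.val_injective
  obtain ⟨ζ, hζ, hann⟩ := exists_rTensor_eq_zero_of_lTensor_eq_zero
    (LinearMap.exact_subtype_ker_map q) hq hf hfg hg hτ
  obtain ⟨V, hV, hζV⟩ := TensorProduct.exists_finite_submodule_right_of_setFinite {ζ}
    (Set.finite_singleton ζ)
  obtain ⟨ζ', rfl⟩ := hζV rfl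
  obtain ⟨n, hn⟩ := h V (Module.Finite.iff_fg.mp hV)
  obtain ⟨k, φ, ψ, hψφ⟩ := exists_comp_eq_smul_of_mem_freeFactorIdeal hn
  have hζ' : i.rTensor V ζ' = 0 := by
    apply Module.Flat.lTensor_preserves_injective_linearMap (M := Fin r → A) V.subtype
      Subtype.val_injective
    rw [map_zero, lTensor_rTensor_comm, hζ]
  have hφζ' : φ.lTensor _ ζ' = 0 := by
    apply Module.Flat.rTensor_preserves_injective_linearMap (M := Fin k → A) i hi
    rw [map_zero, ← lTensor_rTensor_comm, hζ', map_zero]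
  refine ⟨n, hann _ ?_⟩
  rw [← LinearMap.smul_apply, ← LinearMap.lTensor_smul, ← hψφ, LinearMap.lTensor_comp,
    LinearMap.comp_apply, hφζ', map_zero]

end TorOneIsPowTorsion

end TorTorsion

section FlatDimension

open RingTheory.Sequence

/-- `K` has flat dimension at most `n`, by recursion on `n`: flat dimension `0` is flatness, and `K`
has flat dimension at most `n + 1` if it is the quotient of a flat module by a submodule of flat
dimension at most `n`. -/
def HasFlatDimensionLE (A : Type u) [CommRing A] :
    ℕ → ∀ (K : Type u) [AddCommGroup K] [Module A K], Prop
  | 0, K, _, _ => Module.Flat A K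
  | n + 1, K, _, _ => ∃ (F K' : Type u) (_ : AddCommGroup F) (_ : Module A F) (_ : AddCommGroup K')
      (_ : Module A K') (f : K' →ₗ[A] F) (g : F →ₗ[A] K), Module.Flat A F ∧ Function.Injective f ∧
      Function.Exact f g ∧ Function.Surjective g ∧ HasFlatDimensionLE A n K'

namespace HasFlatDimensionLE

theorem congr {A : Type u} [CommRing A] {n : ℕ} {K K' : Type u} [AddCommGroup K] [Module A K]
    [AddCommGroup K'] [Module A K'] (h : HasFlatDimensionLE A n K) (e : K ≃ₗ[A] K') :
    HasFlatDimensionLE A n K' := by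
  cases n with
  | zero => exact (Module.Flat.equiv_iff e).mp h
  | succ n =>
    obtain ⟨F, Z, _, _, _, _, f, g, hF, hf, hfg, hg, hZ⟩ := h
    exact ⟨F, Z, _, _, _, _, f, e.toLinearMap ∘ₗ g, hF, hf, fun x ↦ by simp [← hfg x],
      e.surjective.comp hg, hZ⟩

variable {A B : Type u} [CommRing A] [CommRing B] [Algebra A B]

theorem baseChange [Module.Flat A B] {n : ℕ} {K : Type u} [AddCommGroup K] [Module A K]
    (h : HasFlatDimensionLE A n K) : HasFlatDimensionLE B n (B ⊗[A] K) := by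
  induction n generalizing K with
  | zero =>
    have : Module.Flat A K := h
    exact inferInstanceAs (Module.Flat B (B ⊗[A] K))
  | succ n ih =>
    obtain ⟨F, Z, _, _, _, _, f, g, hF, hf, hfg, hg, hZ⟩ := h
    exact ⟨B ⊗[A] F, B ⊗[A] Z, _, _, _, _, f.baseChange B, g.baseChange B, inferInstance,
      Module.Flat.lTensor_preserves_injective_linearMap f hf, lTensor_exact B hfg hg,
      LinearMap.lTensor_surjective B hg, ih hZ⟩

theorem of_isLocalization (S : Submonoid A) [IsLocalization S B] {n : ℕ}
    (h : ∀ (K : Type u) [AddCommGroup K] [Module A K], HasFlatDimensionLE A n K)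
    (K : Type u) [AddCommGroup K] [Module B K] : HasFlatDimensionLE B n K := by
  let _ : Module A K := Module.compHom K (algebraMap A B)
  have : IsScalarTower A B K := IsScalarTower.of_algebraMap_smul fun _ _ ↦ rfl
  have : Module.Flat A B := IsLocalization.flat B S
  have := isLocalizedModule_id (M := K) S B
  exact (h K).baseChange.congr
    (IsLocalizedModule.isBaseChange S B (LinearMap.id : K →ₗ[A] K)).equiv

end HasFlatDimensionLE

theorem exists_flat_surjective (A K : Type u) [CommRing A] [AddCommGroup K] [Module A K] :
    ∃ (F : Type u) (_ : AddCommGroup F) (_ : Module A F) (g : F →ₗ[A] K),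
      Module.Flat A F ∧ Function.Surjective g :=
  ⟨K →₀ A, inferInstance, inferInstance, Finsupp.linearCombination A id, inferInstance,
    Finsupp.linearCombination_id_surjective A K⟩

theorem hasFlatDimensionLE_of_forall_torOneIsPowTorsion {A : Type u} [CommRing A]
    [IsNoetherianRing A] {X : List A} (hX : IsWeaklyRegular A X) {j : ℕ} {K : Type u}
    [AddCommGroup K] [Module A K]
    (h : ∀ (N : Type u) [AddCommGroup N] [Module A N] [Module.Finite A N],
      IsWeaklyRegular N (X.take j) → TorOneIsPowTorsion (1 : A) N K) :
    HasFlatDimensionLE A j K := by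
  induction j generalizing K with
  | zero =>
    obtain ⟨F, _, _, g, _, hg⟩ := exists_flat_surjective A K
    exact flat_of_forall_lTensor_quotient_injective g.exact_subtype_ker_map hg fun I ↦
      (h (A ⧸ I) (by simp)).lTensor_injective (Submodule.subtype_injective _)
        g.exact_subtype_ker_map hg
  | succ j ih =>
    obtain ⟨F, _, _, g, _, hg⟩ := exists_flat_surjective A K
    refine ⟨F, LinearMap.ker g, _, _, _, _, _, g, ‹_›, Submodule.subtype_injective _,
      g.exact_subtype_ker_map, hg, ih fun N _ _ _ hN ↦ ?_⟩
    obtain ⟨n, q, hq⟩ := Module.Finite.exists_fin' A N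
    have hqker := q.exact_subtype_ker_map
    have hXj : IsWeaklyRegular A (X.take (j + 1)) :=
      ((isWeaklyRegular_append_iff A _ _).mp ((X.take_append_drop (j + 1)).symm ▸ hX)).1
    have hker : IsWeaklyRegular (LinearMap.ker q) (X.take (j + 1)) :=
      isWeaklyRegular_of_isWeaklyRegular_take (Submodule.subtype_injective _) hqker hq
        (List.length_take_le _ _) (isWeaklyRegular_of_flat hXj _)
        (by rwa [List.take_take, min_eq_left j.le_succ])
    exact (h _ hker).syzygy (Submodule.subtype_injective _) hqker hq
      (Submodule.subtype_injective _) g.exact_subtype_ker_map hg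

variable {A : Type u} [CommRing A] [IsLocalRing A] [IsNoetherianRing A]

theorem free_of_isWeaklyRegular {X : List A} (hX : Ideal.ofList X = maximalIdeal A)
    {N : Type*} [AddCommGroup N] [Module A N] [Module.Finite A N] (h : IsWeaklyRegular N X) :
    Module.Free A N := by
  obtain ⟨n, q, hq⟩ := Module.Finite.exists_fin' A N
  have hqker := q.exact_subtype_ker_map
  refine Module.free_of_lTensor_residueField_injective (LinearMap.ker q).subtype q hq hqker ?_
  have := lTensor_quotient_ofList_injective (Submodule.subtype_injective _) hqker hq h
  rwa [hX] at this

theorem hasFlatDimensionLE_length_of_isWeaklyRegular {X : List A} (hX : IsWeaklyRegular A X)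
    (hm : Ideal.ofList X = maximalIdeal A) (K : Type u) [AddCommGroup K] [Module A K] :
    HasFlatDimensionLE A X.length K := by
  refine hasFlatDimensionLE_of_forall_torOneIsPowTorsion hX fun N _ _ _ hN ↦ ?_
  rw [List.take_length] at hN
  have := free_of_isWeaklyRegular hm hN
  exact .of_flat 1 K

end FlatDimension

section FlatnessCriterion

open RingTheory.Sequence

theorem lTensor_injective_of_exact {A N₁ N₂ N₃ K' F : Type*} [CommRing A] [AddCommGroup N₁]
    [AddCommGroup N₂] [AddCommGroup N₃] [AddCommGroup K'] [AddCommGroup F] [Module A N₁]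
    [Module A N₂] [Module A N₃] [Module A K'] [Module A F] [Module.Flat A F]
    {u : N₁ →ₗ[A] N₂} {v : N₂ →ₗ[A] N₃} (hu : Function.Injective u) (huv : Function.Exact u v)
    (hv : Function.Surjective v) {f : K' →ₗ[A] F} (h₁ : Function.Injective (f.lTensor N₁))
    (h₃ : Function.Injective (f.lTensor N₃)) : Function.Injective (f.lTensor N₂) := by
  refine (injective_iff_map_eq_zero _).mpr fun τ hτ ↦ ?_
  have hvτ : v.rTensor K' τ = 0 :=
    (map_eq_zero_iff _ h₃).mp (by rw [lTensor_rTensor_comm, hτ, map_zero])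
  obtain ⟨σ, rfl⟩ := (rTensor_exact K' huv hv _).mp hvτ
  rw [lTensor_rTensor_comm,
    map_eq_zero_iff _ (Module.Flat.rTensor_preserves_injective_linearMap u hu),
    map_eq_zero_iff _ h₁] at hτ
  rw [hτ, map_zero]

theorem lTensor_injective_of_injective {A N N' K' F : Type*} [CommRing A] [AddCommGroup N]
    [AddCommGroup N'] [AddCommGroup K'] [AddCommGroup F] [Module A N] [Module A N'] [Module A K']
    [Module A F] [Module.Flat A K'] {u : N →ₗ[A] N'} (hu : Function.Injective u)
    {f : K' →ₗ[A] F} (h : Function.Injective (f.lTensor N')) :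
    Function.Injective (f.lTensor N) := by
  refine (injective_iff_map_eq_zero _).mpr fun τ hτ ↦ ?_
  rw [← map_eq_zero_iff _ (Module.Flat.rTensor_preserves_injective_linearMap (M := K') u hu),
    ← map_eq_zero_iff _ h, lTensor_rTensor_comm, hτ, map_zero]

theorem TorOneIsPowTorsion.lTensor_injective_of_isSMulRegular {A N K' F K : Type u} [CommRing A]
    [AddCommGroup N] [AddCommGroup K'] [AddCommGroup F] [AddCommGroup K] [Module A N] [Module A K']
    [Module A F] [Module A K] [Module.Flat A F] [Module.Flat A K'] {a : A}
    (h : TorOneIsPowTorsion a N K) (ha : IsSMulRegular N a) {f : K' →ₗ[A] F} {g : F →ₗ[A] K}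
    (hf : Function.Injective f) (hfg : Function.Exact f g) (hg : Function.Surjective g) :
    Function.Injective (f.lTensor N) := by
  refine (injective_iff_map_eq_zero _).mpr fun τ hτ ↦ ?_
  obtain ⟨n, hn⟩ := h F K' f g hf hfg hg τ hτ
  exact isSMulRegular_iff_right_eq_zero_of_smul.mp ((ha.pow n).rTensor K') τ hn

variable {A : Type u} [CommRing A] [IsLocalRing A]

theorem exists_mem_maximalIdeal_isSMulRegular_quotient {P : Ideal A} [P.IsPrime]
    (hP : P ≠ maximalIdeal A) : ∃ a ∈ maximalIdeal A, IsSMulRegular (A ⧸ P) a := by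
  obtain ⟨a, ham, haP⟩ := Set.not_subset.mp fun h ↦
    hP (le_antisymm (le_maximalIdeal Ideal.IsPrime.ne_top') h)
  exact ⟨a, ham, (isSMulRegular_quotient_iff_mem_of_smul_mem _ _).mpr fun x hx ↦
    (Ideal.IsPrime.mem_or_mem ‹_› hx).resolve_left haP⟩

variable [IsNoetherianRing A]

theorem flat_of_presentation_of_torOneIsPowTorsion {K' F K : Type u} [AddCommGroup K']
    [AddCommGroup F] [AddCommGroup K] [Module A K'] [Module A F] [Module A K] [Module.Flat A F]
    [Module.Flat A K'] {f : K' →ₗ[A] F} {g : F →ₗ[A] K} (hf : Function.Injective f)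
    (hfg : Function.Exact f g) (hg : Function.Surjective g)
    (hK : ∀ a ∈ maximalIdeal A, ∀ (N : Type u) [AddCommGroup N] [Module A N] [Module.Finite A N],
      TorOneIsPowTorsion a N K)
    {ys : List A} (hys : IsWeaklyRegular K ys)
    {e : (A ⧸ maximalIdeal A) →ₗ[A] (A ⧸ Ideal.ofList ys)} (he : Function.Injective e) :
    Module.Flat A K := by
  suffices main : ∀ (N : Type u) [AddCommGroup N] [Module A N] (_ : Module.Finite A N),
      Function.Injective (f.lTensor N) from
    flat_of_forall_lTensor_quotient_injective hfg hg fun I ↦ main (A ⧸ I) inferInstance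
  intro N _ _ hN
  induction hN using IsNoetherianRing.induction_on_isQuotientEquivQuotientPrime A with
  | subsingleton N => exact Function.injective_of_subsingleton _
  | quotient N P φ =>
    obtain ⟨P, hPprime⟩ := P
    by_cases hP : P = maximalIdeal A
    · subst hP
      exact lTensor_injective_of_injective (u := e ∘ₗ φ.toLinearMap) (he.comp φ.injective)
        (lTensor_quotient_ofList_injective hf hfg hg hys)
    · obtain ⟨a, ham, ha⟩ := exists_mem_maximalIdeal_isSMulRegular_quotient hP
      exact (hK a ham N).lTensor_injective_of_isSMulRegular ((φ.isSMulRegular_congr a).mpr ha)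
        hf hfg hg
  | exact N₁ N₂ N₃ u v hu hv huv h₁ h₃ => exact lTensor_injective_of_exact hu huv hv h₁ h₃

theorem HasFlatDimensionLE.flat {ys : List A} (hA : IsWeaklyRegular A ys)
    {e : (A ⧸ maximalIdeal A) →ₗ[A] (A ⧸ Ideal.ofList ys)} (he : Function.Injective e)
    {n : ℕ} {K : Type u} [AddCommGroup K] [Module A K] (h : HasFlatDimensionLE A n K)
    (hK : ∀ a ∈ maximalIdeal A, ∀ (N : Type u) [AddCommGroup N] [Module A N] [Module.Finite A N],
      TorOneIsPowTorsion a N K)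
    (hys : IsWeaklyRegular K ys) : Module.Flat A K := by
  induction n generalizing K with
  | zero => exact h
  | succ n ih =>
    obtain ⟨F, K', _, _, _, _, f, g, _, hf, hfg, hg, hK'⟩ := h
    have hysK' : IsWeaklyRegular K' ys :=
      isWeaklyRegular_of_isWeaklyRegular_take hf hfg hg ys.length.le_succ
        (isWeaklyRegular_of_flat hA F) (by rwa [List.take_length])
    have : Module.Flat A K' := ih hK' (fun a ha N _ _ _ ↦ by
      obtain ⟨r, q, hq⟩ := Module.Finite.exists_fin' A N
      exact (hK a ha _).syzygy (Submodule.subtype_injective _) q.exact_subtype_ker_map hq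
        hf hfg hg) hysK'
    exact flat_of_presentation_of_torOneIsPowTorsion hf hfg hg hK hys he

end FlatnessCriterion

section MaximalRegularSequence

open RingTheory.Sequence

variable {A : Type*} [CommRing A] [IsLocalRing A] [IsNoetherianRing A]

theorem exists_injective_residueField_of_forall_not_isSMulRegular {N : Type*} [AddCommGroup N]
    [Module A N] [Module.Finite A N] (h : ∀ a ∈ maximalIdeal A, ¬ IsSMulRegular N a) :
    ∃ e : (A ⧸ maximalIdeal A) →ₗ[A] N, Function.Injective e := by
  have hfin := associatedPrimes.finite A N
  have hzd : (maximalIdeal A : Set A) ⊆ ⋃ P ∈ associatedPrimes A N, P := by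
    rw [biUnion_associatedPrimes_eq_zero_divisors]
    intro a ha
    simpa [isSMulRegular_iff_right_eq_zero_of_smul, and_comm] using h a ha
  obtain ⟨P, hP, hmP⟩ := (Ideal.subset_union_prime (s := hfin.toFinset) (f := id) ⊥ ⊥
    fun P hP _ _ ↦ (hfin.mem_toFinset.mp hP).1).mp (by simpa using hzd)
  rw [hfin.mem_toFinset] at hP
  obtain rfl : maximalIdeal A = P := (maximalIdeal.isMaximal A).eq_of_le hP.1.ne_top hmP
  exact ((isAssociatedPrime_iff_exists_injective_linearMap _ _).mp hP).2

theorem exists_isWeaklyRegular_injective_residueField :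
    ∃ ys : List A, (∀ a ∈ ys, a ∈ maximalIdeal A) ∧ IsWeaklyRegular A ys ∧
      ∃ e : (A ⧸ maximalIdeal A) →ₗ[A] (A ⧸ Ideal.ofList ys), Function.Injective e := by
  obtain ⟨_, ⟨ys, hm, hys, rfl⟩, hmax⟩ := set_has_maximal_iff_noetherian.mpr ‹IsNoetherianRing A›
    {I | ∃ ys : List A, (∀ a ∈ ys, a ∈ maximalIdeal A) ∧ IsWeaklyRegular A ys ∧ Ideal.ofList ys = I}
    ⟨_, [], by simp, .nil A A, rfl⟩
  refine ⟨ys, hm, hys, exists_injective_residueField_of_forall_not_isSMulRegular fun a ha hreg ↦ ?_⟩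
  have hle : Ideal.ofList ys ≤ Ideal.ofList (ys ++ [a]) := by
    rw [Ideal.ofList_append]; exact le_sup_left
  refine hmax (Ideal.ofList (ys ++ [a])) ⟨_, ?_, ?_, rfl⟩ (hle.lt_of_not_ge fun hge ↦ ?_)
  · simpa [or_imp, forall_and] using ⟨hm, ha⟩
  · rw [isWeaklyRegular_append_iff, isWeaklyRegular_singleton_iff]
    exact ⟨hys, by rwa [smul_eq_mul, Ideal.mul_top]⟩
  · have hays : a • (1 : A) ∈ Ideal.ofList ys := by
      simpa using hge (Ideal.subset_span (by simp : a ∈ {r | r ∈ ys ++ [a]}))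
    have hone := mem_of_isSMulRegular_quotient_of_smul_mem hreg hays
    exact (maximalIdeal.isMaximal A).ne_top
      (Ideal.eq_top_of_isUnit_mem _ (Ideal.span_le.mpr hm hone) isUnit_one)

end MaximalRegularSequence

section Flatness

open RingTheory.Sequence

theorem mem_freeFactorIdeal_of_sum_eq {A V M : Type*} [CommRing A] [AddCommGroup V] [Module A V]
    [AddCommGroup M] [Module A M] {g : V →ₗ[A] M} {a : A} {ι : Type*} [Fintype ι]
    (φ : ι → V →ₗ[A] A) (w : ι → M) (h : ∀ v, ∑ i, φ i v • w i = a • g v) :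
    a ∈ freeFactorIdeal g := by
  have hsum : a • g = ∑ i, (φ i).smulRight (w i) := by
    ext v; simp [← h]
  rw [freeFactorIdeal, Submodule.mem_comap, LinearMap.toSpanSingleton_apply, hsum]
  exact sum_mem fun i _ ↦ Submodule.subset_span ⟨(φ i, w i), rfl⟩

theorem exists_forall_isIntegral_smul_of_isLocalization {A B L ι : Type*} [CommRing A] [CommRing B]
    [CommRing L] [Algebra A B] [Algebra A L] [Algebra B L] [IsScalarTower A B L] (S : Submonoid A)
    [IsLocalization S B] [Finite ι] {b : ι → L} (hb : ∀ i, IsIntegral B (b i)) :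
    ∃ s ∈ S, ∀ i, IsIntegral A (s • b i) := by
  classical
  have := Fintype.ofFinite ι
  choose s hs using fun i ↦ (hb i).exists_multiple_integral_of_isLocalization S
  refine ⟨_, (∏ i, s i).2, fun i ↦ ?_⟩
  rw [← Finset.prod_erase_mul _ _ (Finset.mem_univ i), Submonoid.coe_mul, mul_smul]
  exact (hs i).smul _

theorem exists_mem_freeFactorIdeal_of_flat_integralClosure {A B L : Type*} [CommRing A]
    [IsNoetherianRing A] [CommRing L] [Algebra A L] [CommRing B] [Algebra A B] [Algebra B L]
    [IsScalarTower A B L] (S : Submonoid A) [IsLocalization S B]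
    [Module.Flat B (integralClosure B L)] {V : Submodule A (integralClosure A L)} (hV : V.FG) :
    ∃ s ∈ S, s ∈ freeFactorIdeal V.subtype := by
  have : Module.Flat A B := IsLocalization.flat B S
  have : Module.Flat A (integralClosure B L) := Module.Flat.trans A B _
  have : Module.Finite A V := Module.Finite.iff_fg.mpr hV
  have : Module.FinitePresentation A V := Module.finitePresentation_of_finite A V
  let j : V →ₗ[A] integralClosure B L :=
    { toFun v := ⟨((v : integralClosure A L) : L), v.1.2.tower_top⟩
      map_add' _ _ := rfl
      map_smul' _ _ := rfl }
  obtain ⟨k, φ, ψ, hj⟩ := Module.Flat.exists_factorization_of_finitePresentation j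
  obtain ⟨s, hs, hint⟩ := exists_forall_isIntegral_smul_of_isLocalization S
    fun i : Fin k ↦ (ψ (Finsupp.single i 1)).2
  refine ⟨s, hs, mem_freeFactorIdeal_of_sum_eq (fun i ↦ Finsupp.lapply i ∘ₗ φ)
    (fun i ↦ ⟨_, hint i⟩) fun v ↦ Subtype.ext ?_⟩
  have hψ : ψ (φ v) = ∑ i, φ v i • ψ (Finsupp.single i 1) := by
    conv_lhs => rw [← Finsupp.univ_sum_single (φ v)]
    simp only [map_sum, ← map_smul, Finsupp.smul_single, smul_eq_mul, mul_one]
  have hv : ((v : integralClosure A L) : L) = ∑ i, φ v i • (ψ (Finsupp.single i 1) : L) := by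
    have hjv : ((v : integralClosure A L) : L) = ψ (φ v) :=
      congrArg Subtype.val (LinearMap.congr_fun hj v)
    rw [hjv, hψ]
    simp
  simp [hv, Finset.smul_sum, smul_comm s]

theorem maximalIdeal_le_radical {A : Type*} [CommRing A] [IsLocalRing A] {I : Ideal A}
    (h : ∀ (P : Ideal A) [P.IsPrime], P ≠ maximalIdeal A → ∃ s ∈ P.primeCompl, s ∈ I) :
    maximalIdeal A ≤ I.radical := by
  rw [Ideal.radical_eq_sInf]
  refine le_sInf fun P ⟨hIP, hP⟩ ↦ ?_
  by_contra hle
  obtain ⟨s, hsP, hsI⟩ := h P fun hPm ↦ hle hPm.ge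
  exact hsP (hIP hsI)

theorem ringKrullDim_localization_lt {A : Type*} [CommRing A] [IsLocalRing A] [IsNoetherianRing A]
    {P : Ideal A} [P.IsPrime] (hP : P ≠ maximalIdeal A) {n : ℕ} (h : ringKrullDim A < (n + 1 : ℕ)) :
    ringKrullDim (Localization.AtPrime P) < n := by
  rw [IsLocalization.AtPrime.ringKrullDim_eq_height P]
  rw [← maximalIdeal_height_eq_ringKrullDim] at h
  have hlt := Ideal.height_strict_mono_of_isPrime
    ((le_maximalIdeal (Ideal.IsPrime.ne_top' (I := P))).lt_of_ne hP)
  have hm : (maximalIdeal A).height < (n : ℕ∞) + 1 := by exact_mod_cast h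
  exact_mod_cast hlt.trans_le (Order.le_of_lt_add_one hm)

theorem exists_algebra_localization {A L : Type*} [CommRing A] [Field L] [Algebra A L]
    [FaithfulSMul A L] (P : Ideal A) [P.IsPrime] :
    ∃ _ : Algebra (Localization.AtPrime P) L, IsScalarTower A (Localization.AtPrime P) L ∧
      FaithfulSMul (Localization.AtPrime P) L := by
  have hinj := FaithfulSMul.algebraMap_injective A L
  have hunit (s : P.primeCompl) : IsUnit (algebraMap A L s) :=
    isUnit_iff_ne_zero.mpr <| (map_ne_zero_iff _ hinj).mpr fun h ↦ s.2 (h ▸ P.zero_mem)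
  let lift := IsLocalization.lift (S := Localization.AtPrime P) hunit
  have hlift : Function.Injective lift := by
    refine (IsLocalization.lift_injective_iff hunit).mpr fun x y ↦ ⟨fun h ↦ ?_, fun h ↦ ?_⟩
    · have := congrArg lift h
      simpa only [lift, IsLocalization.lift_eq] using this
    · rw [hinj h]
  let _ := lift.toAlgebra
  exact ⟨lift.toAlgebra, .of_algebraMap_eq fun x ↦ (IsLocalization.lift_eq hunit x).symm,
    (faithfulSMul_iff_algebraMap_injective _ _).mpr hlift⟩

theorem flat_integralClosure_of_le_radical_freeFactorIdeal (p : ℕ) [Fact p.Prime] {A L : Type u}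
    [CommRing A] [IsLocalRing A] [IsNoetherianRing A] [Field L] [IsAlgClosed L] [CharP L p]
    [Algebra A L] [FaithfulSMul A L] {N : ℕ}
    (hN : HasFlatDimensionLE A N (integralClosure A L))
    (h : ∀ V : Submodule A (integralClosure A L), V.FG →
      maximalIdeal A ≤ (freeFactorIdeal V.subtype).radical) :
    Module.Flat A (integralClosure A L) := by
  obtain ⟨ys, hm, hys, e, he⟩ := exists_isWeaklyRegular_injective_residueField (A := A)
  have : CharP (integralClosure A L) p :=
    (algebraMap (integralClosure A L) L).charP (FaithfulSMul.algebraMap_injective _ L) p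
  have : FaithfulSMul A (integralClosure A L) :=
    (faithfulSMul_iff_algebraMap_injective _ _).mpr fun _ _ h ↦
      FaithfulSMul.algebraMap_injective A L (congrArg Subtype.val h)
  have hm' (i) : ys.get i ∈ maximalIdeal A := hm _ (List.get_mem ys i)
  have hreg : IsPermutablyRegular (integralClosure A L) ys.get :=
    .of_isIntegral L p (.of_isWeaklyRegular_ofFn hm' (by rwa [List.ofFn_get]))
      fun V hV l ↦ h V hV (hm' l)
  refine hN.flat hys he (fun a ha N _ _ _ ↦ .of_mem_radical_freeFactorIdeal fun V hV ↦ h V hV ha) ?_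
  simpa only [List.ofFn_get] using hreg.isWeaklyRegular_ofFn

theorem flat_integralClosure (p : ℕ) [Fact p.Prime] {n : ℕ} {A L : Type u} [CommRing A]
    [IsLocalRing A] [IsNoetherianRing A] [Field L] [IsAlgClosed L] [CharP L p] [Algebra A L]
    [FaithfulSMul A L] (hdim : ringKrullDim A < n) {N : ℕ}
    (hN : ∀ (K : Type u) [AddCommGroup K] [Module A K], HasFlatDimensionLE A N K) :
    Module.Flat A (integralClosure A L) := by
  induction n generalizing A with
  | zero => exact absurd (ringKrullDim_nonneg_of_nontrivial (R := A)) (not_le.mpr hdim)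
  | succ n ih =>
    refine flat_integralClosure_of_le_radical_freeFactorIdeal p (hN _) fun V hV ↦
      maximalIdeal_le_radical fun P _ hP ↦ ?_
    obtain ⟨_, _, _⟩ := exists_algebra_localization (L := L) P
    have := ih (ringKrullDim_localization_lt hP hdim)
      (HasFlatDimensionLE.of_isLocalization P.primeCompl hN)
    exact exists_mem_freeFactorIdeal_of_flat_integralClosure (B := Localization.AtPrime P)
      P.primeCompl hV

end Flatness

section CoefficientField

open Polynomial

variable {B k : Type*} [CommRing B] [Field k] (π : B →+* k) (p : ℕ) [Fact p.Prime]

theorem exists_subring_isField_lt [CharP k p] {S : Subring B} (hS : IsField S) {b : B}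
    (hbp : b ^ p ∈ S) (hb : ∀ s ∈ S, π s ≠ π b) :
    ∃ S' : Subring B, IsField S' ∧ S < S' := by
  let _ : Field S := hS.toField
  let f : S[X] := X ^ p - C ⟨b ^ p, hbp⟩
  have hf : Irreducible f := by
    refine X_pow_sub_C_irreducible_of_prime Fact.out fun s hs ↦ hb s s.2 ?_
    have : ExpChar k p := .prime Fact.out
    refine frobenius_inj k p ?_
    simpa [frobenius_def] using congrArg (fun s : S ↦ π s) hs
  have : Fact (Irreducible f) := ⟨hf⟩
  let φ : AdjoinRoot f →+* B := AdjoinRoot.lift S.subtype b (by simp [f])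
  have : Nontrivial B := π.domain_nontrivial
  have hrange : IsField φ.range :=
    (RingEquiv.ofBijective φ.rangeRestrict
      ⟨φ.rangeRestrict.injective, φ.rangeRestrict_surjective⟩).symm.toMulEquiv.isField
      (Field.toIsField _)
  refine ⟨φ.range, hrange, lt_of_le_of_ne (fun s hs ↦ ⟨AdjoinRoot.of f ⟨s, hs⟩, ?_⟩) ?_⟩
  · simp [φ]
  · intro hSφ
    exact hb b (hSφ ▸ ⟨AdjoinRoot.root f, by simp [φ]⟩) rfl

variable {π}

theorem isField_frobenius_range [ExpChar B p] (hπ : ∀ b, π b = 0 → b ^ 2 = 0)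
    (hsurj : Function.Surjective π) : IsField (frobenius B p).range := by
  have : Nontrivial B := π.domain_nontrivial
  refine ⟨exists_pair_ne _, mul_comm, ?_⟩
  rintro ⟨_, b, rfl⟩ hne
  have hb : π b ≠ 0 := fun h ↦ hne <| Subtype.ext <| by
    have hp : 2 ≤ p := (Fact.out : p.Prime).two_le
    simpa [frobenius_def] using pow_eq_zero_of_le hp (hπ b h)
  obtain ⟨c, hc⟩ := hsurj (π b)⁻¹
  refine ⟨⟨_, c, rfl⟩, Subtype.ext ?_⟩
  have hbc : (b * c - 1) ^ p = 0 :=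
    pow_eq_zero_of_le (Fact.out : p.Prime).two_le (hπ _ (by simp [hc, hb]))
  have := congrArg (· + 1) ((frobenius B p).map_sub (b * c) 1)
  simpa [frobenius_def, hbc, eq_comm, mul_pow] using this

theorem isField_sSup_of_isChain [Nontrivial B] {c : Set (Subring B)} (hc : c.Nonempty)
    (hchain : IsChain (· ≤ ·) c) (hfield : ∀ S ∈ c, IsField S) : IsField (sSup c : Subring B) := by
  have hmem {b : B} := Subring.mem_sSup_of_directedOn (x := b) hc hchain.directedOn
  refine ⟨exists_pair_ne _, mul_comm, ?_⟩
  rintro ⟨b, hb⟩ hne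
  obtain ⟨S, hS, hbS⟩ := hmem.mp hb
  obtain ⟨⟨d, hd⟩, hbd⟩ := (hfield S hS).mul_inv_cancel (a := ⟨b, hbS⟩)
    fun h ↦ hne (Subtype.ext (congrArg S.subtype h))
  exact ⟨⟨d, hmem.mpr ⟨S, hS, hd⟩⟩, Subtype.ext (congrArg S.subtype hbd)⟩

/-- A maximal subfield of `B` containing the `p`-th powers maps onto `k`. -/
theorem exists_rightInverse_of_sq_eq_zero [CharP k p] [ExpChar B p]
    (hπ : ∀ b, π b = 0 → b ^ 2 = 0) (hsurj : Function.Surjective π) :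
    ∃ s : k →+* B, Function.RightInverse s π := by
  have : Nontrivial B := π.domain_nontrivial
  obtain ⟨S, hle, hS⟩ := zorn_le_nonempty₀ {S : Subring B | IsField S}
    (fun c hc hchain S hS ↦ ⟨sSup c, isField_sSup_of_isChain ⟨S, hS⟩ hchain hc,
      fun _ ↦ le_sSup⟩) _ (isField_frobenius_range p hπ hsurj)
  have hSsurj : Function.Surjective (π.comp S.subtype) := by
    intro a
    obtain ⟨b, rfl⟩ := hsurj a
    by_contra! hb
    obtain ⟨S', hS', hlt⟩ := exists_subring_isField_lt π p hS.prop (hle ⟨b, rfl⟩)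
      fun s hs ↦ hb ⟨s, hs⟩
    exact hlt.not_ge (hS.le_of_ge hS' hlt.le)
  let _ : Field S := hS.prop.toField
  let e := RingEquiv.ofBijective (π.comp S.subtype) ⟨RingHom.injective _, hSsurj⟩
  exact ⟨S.subtype.comp e.symm.toRingHom, e.apply_symm_apply⟩

theorem formallySmooth_zmod [Algebra (ZMod p) k] : Algebra.FormallySmooth (ZMod p) k := by
  refine .of_comp_surjective fun B _ _ I hI f ↦ ?_
  let P : Subring (B × k) := RingHom.eqLocus ((Ideal.Quotient.mk I).comp (RingHom.fst B k))
    (f.toRingHom.comp (RingHom.snd B k))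
  let π : P →+* k := (RingHom.snd B k).comp P.subtype
  have hsurj : Function.Surjective π := fun a ↦
    have ⟨b, hb⟩ := Ideal.Quotient.mk_surjective (f a)
    ⟨⟨(b, a), hb⟩, rfl⟩
  have hker (b : P) (hb : π b = 0) : b ^ 2 = 0 := by
    obtain ⟨⟨b, a⟩, hba⟩ := b
    obtain rfl : a = 0 := hb
    have hbI : b ∈ I := Ideal.Quotient.eq_zero_iff_mem.mp (by simpa [P] using hba)
    have hb2 : b ^ 2 = 0 := by simpa [hI] using Ideal.pow_mem_pow hbI 2
    ext <;> simp [hb2]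
  have : CharP k p := charP_of_injective_algebraMap (algebraMap (ZMod p) k).injective p
  have : Nontrivial P := π.domain_nontrivial
  have hB : (p : B) = 0 := by simpa using (map_natCast (algebraMap (ZMod p) B) p).symm
  have : CharP P p := (CharP.charP_iff_prime_eq_zero Fact.out).mpr (by ext <;> simp [hB])
  have : ExpChar P p := .prime Fact.out
  obtain ⟨s, hs⟩ := exists_rightInverse_of_sq_eq_zero p hker hsurj
  let g : k →+* B := (RingHom.fst B k).comp (P.subtype.comp s)
  refine ⟨⟨g, fun r ↦ RingHom.congr_fun
    (Subsingleton.elim (g.comp (algebraMap (ZMod p) k)) (algebraMap (ZMod p) B)) r⟩, ?_⟩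
  ext a
  exact (s a).2.trans (congrArg f (hs a))

theorem exists_rightInverse_residue {R : Type*} [CommRing R] [IsLocalRing R]
    [IsAdicComplete (maximalIdeal R) R] [CharP R p] :
    ∃ s : ResidueField R →+* R, Function.RightInverse s (residue R) := by
  let _ : Algebra (ZMod p) R := ZMod.algebra R p
  have := formallySmooth_zmod (k := ResidueField R) p
  obtain ⟨s, hs⟩ := Algebra.FormallySmooth.exists_mkₐ_comp_eq_of_isAdicComplete
    (AlgHom.id (ZMod p) (ResidueField R))
  exact ⟨s, AlgHom.congr_fun hs⟩

end CoefficientField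

section PowerSeries

open RingTheory.Sequence MvPowerSeries

variable {σ : Type*}

theorem mem_span_X_image_iff {k : Type*} [CommRing k] {S : Finset σ} {f : MvPowerSeries σ k} :
    f ∈ Ideal.span (X '' (S : Set σ)) ↔ ∀ m : σ →₀ ℕ, (∀ i ∈ S, m i = 0) → coeff m f = 0 := by
  classical
  refine ⟨fun hf m hm ↦ ?_, fun hf ↦ ?_⟩
  · obtain ⟨g, rfl⟩ := (Submodule.mem_span_image_finset_iff_exists_fun _).mp hf
    rw [map_sum]
    exact Finset.sum_eq_zero fun i _ ↦ X_dvd_iff.mp (Dvd.intro_left (g i) rfl) m (hm i i.2)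
  induction S using Finset.induction_on generalizing f with
  | empty =>
    obtain rfl : f = 0 := MvPowerSeries.ext fun m ↦ hf m (by simp)
    exact zero_mem _
  | insert a S _ ih =>
    let f₀ : MvPowerSeries σ k := fun m ↦ if m a = 0 then coeff m f else 0
    have hf₀ (m) : coeff m f₀ = if m a = 0 then coeff m f else 0 := rfl
    have hdvd : X a ∣ f - f₀ := X_dvd_iff.mpr fun m hm ↦ by simp [hf₀, hm]
    have hmem : f₀ ∈ Ideal.span (X '' (S : Set σ)) := ih fun m hm ↦ by
      rw [hf₀]
      split_ifs with hma
      · exact hf m (by simpa [hma] using hm)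
      · rfl
    rw [Finset.coe_insert, Set.image_insert_eq, Ideal.span_insert, ← sub_add_cancel f f₀]
    exact Submodule.add_mem_sup (Ideal.mem_span_singleton.mpr hdvd) hmem

theorem isPermutablyRegular_X {k : Type*} [CommRing k] :
    IsPermutablyRegular (MvPowerSeries σ k) (X : σ → MvPowerSeries σ k) := by
  classical
  intro S j hj
  rw [isSMulRegular_quotient_iff_mem_of_smul_mem, smul_eq_mul, Ideal.mul_top]
  intro f hf
  rw [mem_span_X_image_iff] at hf ⊢
  intro m hm
  have := hf (Finsupp.single j 1 + m) fun i hi ↦ by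
    simp [hm i hi, (ne_of_mem_of_not_mem hi hj).symm]
  rwa [smul_eq_mul, X, coeff_add_monomial_mul, one_mul] at this

theorem span_range_X_eq_maximalIdeal {k : Type*} [Field k] [Finite σ] :
    Ideal.span (Set.range X) = maximalIdeal (MvPowerSeries σ k) := by
  have := Fintype.ofFinite σ
  ext f
  rw [← Set.image_univ, ← Finset.coe_univ, mem_span_X_image_iff, mem_maximalIdeal,
    mem_nonunits_iff, isUnit_iff_constantCoeff, isUnit_iff_ne_zero, not_not,
    ← coeff_zero_eq_constantCoeff_apply]
  exact ⟨fun h ↦ h 0 fun _ _ ↦ rfl, fun h m hm ↦ by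
    rwa [show m = 0 from Finsupp.ext fun i ↦ hm i (Finset.mem_univ i)]⟩

theorem ringKrullDim_mvPowerSeries_le {k : Type*} [Field k] [Finite σ] :
    ringKrullDim (MvPowerSeries σ k) ≤ Nat.card σ := by
  refine (ringKrullDim_le_spanFinrank_maximalIdeal _).trans ?_
  rw [← span_range_X_eq_maximalIdeal]
  exact_mod_cast (Submodule.spanFinrank_span_le_ncard_of_finite (Set.finite_range _)).trans
    (Finite.card_range_le _)

theorem exists_mvPowerSeries_ringHom {R k : Type*} [CommRing R] [CommRing k] [Finite σ]
    {I : Ideal R} [IsAdicComplete I R] (s : k →+* R) {x : σ → R} (hx : ∀ i, x i ∈ I) :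
    ∃ Φ : MvPowerSeries σ k →+* R, (∀ i, Φ (X i) = x i) ∧ ∀ a, Φ (C a) = s a := by
  let _ : WithIdeal R := ⟨I⟩
  have hadic : IsAdic I := rfl
  obtain ⟨_, _⟩ := hadic.isAdicComplete_iff.mp inferInstance
  let _ : UniformSpace k := ⊥
  have : DiscreteTopology k := ⟨rfl⟩
  have hs : Continuous s := continuous_of_discreteTopology
  have hx : HasEval x := by
    refine ⟨fun i ↦ hadic.hasBasis_nhds_zero.tendsto_right_iff.mpr fun n _ ↦ ?_, by simp⟩
    filter_upwards [Filter.eventually_ge_atTop n] with m hm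
    exact Ideal.pow_le_pow_right hm (Ideal.pow_mem_pow (hx i) m)
  refine ⟨eval₂Hom hs hx, fun i ↦ ?_, fun a ↦ ?_⟩
  · rw [coe_eval₂Hom, eval₂_X]
  · rw [coe_eval₂Hom, eval₂_C]

end PowerSeries

section CompleteFiniteness

instance isPrecomplete_pi {A M ι : Type*} [CommRing A] [AddCommGroup M] [Module A M] [Finite ι]
    {I : Ideal A} [IsPrecomplete I M] : IsPrecomplete I (ι → M) := by
  classical
  have := Fintype.ofFinite ι
  refine ⟨fun f hf ↦ ?_⟩
  have hcoord (i) : ∃ l : M, ∀ n, f n i ≡ l [SMOD (I ^ n • ⊤ : Submodule A M)] :=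
    IsPrecomplete.prec ‹_› fun {m n} hmn ↦
      ((hf hmn).map (LinearMap.proj i)).mono (by
        rw [Submodule.map_smul'']; exact Submodule.smul_mono le_rfl le_top)
  choose l hl using hcoord
  refine ⟨l, fun n ↦ ?_⟩
  rw [SModEq.sub_mem, ← Finset.univ_sum_single (f n - l)]
  refine sum_mem fun i _ ↦ ?_
  have hi := Submodule.mem_map_of_mem (f := LinearMap.single A (fun _ ↦ M) i)
    (SModEq.sub_mem.mp (hl i n))
  rw [Submodule.map_smul''] at hi
  exact Submodule.smul_mono le_rfl le_top hi

theorem finite_of_finite_quotient_smul_top {A M : Type*} [CommRing A] [AddCommGroup M] [Module A M]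
    (I : Ideal A) [IsPrecomplete I A] [IsHausdorff I M]
    [Module.Finite A (M ⧸ (I • ⊤ : Submodule A M))] : Module.Finite A M := by
  obtain ⟨r, q, hq⟩ := Module.Finite.exists_fin' A (M ⧸ (I • ⊤ : Submodule A M))
  obtain ⟨f, hf⟩ := Module.projective_lifting_property (I • ⊤ : Submodule A M).mkQ q
    (Submodule.mkQ_surjective _)
  exact .of_surjective f (surjective_of_mkQ_comp_surjective (I := I) (hf ▸ hq))

theorem finite_of_pow_smul_top_eq_bot {A R : Type*} [CommRing A] [CommRing R] [IsNoetherianRing R]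
    [Algebra A R] (m : Ideal R) [Module.Finite A (R ⧸ m)] {N : ℕ} {M : Type*} [AddCommGroup M]
    [Module R M] [Module A M] [IsScalarTower A R M] [Module.Finite R M]
    (h : m ^ N • (⊤ : Submodule R M) = ⊥) : Module.Finite A M := by
  induction N generalizing M with
  | zero =>
    have : Subsingleton M := by simpa [subsingleton_iff_bot_eq_top, eq_comm] using h
    infer_instance
  | succ N ih =>
    let W : Submodule R M := m • ⊤
    have hquot : Module.Finite A (M ⧸ W) := by
      have : Module.Finite (R ⧸ m) (M ⧸ W) := .of_restrictScalars_finite R _ _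
      exact .trans (R ⧸ m) _
    have hsub : Module.Finite A (W.restrictScalars A) := ih (M := W) <| by
      refine Submodule.map_injective_of_injective W.injective_subtype ?_
      rw [Submodule.map_smul'', Submodule.map_subtype_top, Submodule.map_bot, ← mul_smul,
        ← pow_succ, h]
    have hquot' : Module.Finite A (M ⧸ W.restrictScalars A) := hquot
    exact .of_submodule_quotient (W.restrictScalars A)

end CompleteFiniteness

section NoetherNormalization

theorem finite_of_radical_map_eq_maximalIdeal {A R : Type*} [CommRing A] (I : Ideal A)
    [IsPrecomplete I A] [CommRing R] [IsLocalRing R] [IsNoetherianRing R] [Algebra A R]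
    (hI : (I.map (algebraMap A R)).radical = maximalIdeal R)
    [Module.Finite A (R ⧸ maximalIdeal R)] : Module.Finite A R := by
  have hne : I.map (algebraMap A R) ≠ ⊤ := fun h ↦
    (maximalIdeal.isMaximal R).ne_top (by rw [← hI, h, Ideal.radical_top])
  have : IsHausdorff I R := IsHausdorff.map_algebraMap_iff.mp (.of_isLocalRing _ R hne)
  obtain ⟨N, hN⟩ := Ideal.exists_radical_pow_le_of_fg (I.map (algebraMap A R))
    (Ideal.fg_of_isNoetherianRing _)
  rw [hI] at hN
  have hquot : Module.Finite A (R ⧸ I.map (algebraMap A R)) := by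
    refine finite_of_pow_smul_top_eq_bot (R := R) (maximalIdeal R) (N := N) ?_
    rw [eq_bot_iff, Submodule.smul_le]
    rintro r hr q -
    obtain ⟨s, rfl⟩ := Ideal.Quotient.mk_surjective q
    exact Ideal.Quotient.eq_zero_iff_mem.mpr (Ideal.mul_mem_right s _ (hN hr))
  have : Module.Finite A (R ⧸ (I • ⊤ : Submodule A R)) := by
    rw [Ideal.smul_top_eq_map]
    exact hquot
  exact finite_of_finite_quotient_smul_top I

theorem ringKrullDim_le_of_isIntegral {A R : Type*} [CommRing A] [CommRing R] {φ : A →+* R}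
    (hφ : φ.IsIntegral) : ringKrullDim R ≤ ringKrullDim A := by
  let _ := φ.toAlgebra
  have : Algebra.IsIntegral A R := ⟨hφ⟩
  exact Order.krullDim_le_of_strictMono (PrimeSpectrum.comap φ)
    fun _ _ h ↦ Ideal.IsIntegral.comap_lt_comap h

theorem injective_of_isIntegral_of_ringKrullDim_le {A R : Type*} [CommRing A] [IsDomain A]
    [CommRing R] {φ : A →+* R} (hφ : φ.IsIntegral) {d : ℕ} (hA : ringKrullDim A ≤ d)
    (hR : d ≤ ringKrullDim R) : Function.Injective φ := by
  refine (injective_iff_map_eq_zero φ).mpr fun a ha ↦ by_contra fun hne ↦ ?_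
  let ψ : A ⧸ Ideal.span {a} →+* R := Ideal.Quotient.lift _ φ <| by
    intro b hb
    obtain ⟨c, rfl⟩ := Ideal.mem_span_singleton.mp hb
    simp [ha]
  have hψ : ψ.IsIntegral := RingHom.IsIntegral.tower_top (Ideal.Quotient.mk _) ψ hφ
  have hlt : (d : WithBot ℕ∞) + 1 ≤ d := calc
    (d : WithBot ℕ∞) + 1 ≤ ringKrullDim (A ⧸ Ideal.span {a}) + 1 := by
      gcongr; exact hR.trans (ringKrullDim_le_of_isIntegral hψ)
    _ ≤ ringKrullDim A :=
      ringKrullDim_quotient_succ_le_of_nonZeroDivisor (mem_nonZeroDivisors_of_ne_zero hne)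
    _ ≤ d := hA
  have : d + 1 ≤ d := by exact_mod_cast hlt
  lia

theorem exists_finite_injective_ringHom_mvPowerSeries {R σ : Type*} [CommRing R]
    [IsNoetherianRing R] [IsLocalRing R] [IsAdicComplete (maximalIdeal R) R] (p : ℕ)
    [Fact p.Prime] [CharP R p] [Finite σ] {x : σ → R} (hdim : ringKrullDim R = Nat.card σ)
    (hx : (Ideal.span (Set.range x)).radical = maximalIdeal R) :
    ∃ φ : MvPowerSeries σ (ResidueField R) →+* R,
      φ.Finite ∧ Function.Injective φ ∧ ∀ i, φ (MvPowerSeries.X i) = x i := by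
  obtain ⟨s, hs⟩ := exists_rightInverse_residue (R := R) p
  obtain ⟨φ, hX, hC⟩ := exists_mvPowerSeries_ringHom (I := maximalIdeal R) s (x := x)
    fun i ↦ hx ▸ Ideal.le_radical (Ideal.subset_span ⟨i, rfl⟩)
  have hfin : φ.Finite := by
    let _ := φ.toAlgebra
    have : Module.Finite (MvPowerSeries σ (ResidueField R)) (R ⧸ maximalIdeal R) := by
      refine .of_surjective (Algebra.linearMap _ (ResidueField R)) fun a ↦ ⟨MvPowerSeries.C a, ?_⟩
      exact (congrArg (residue R) (hC a)).trans (hs a)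
    refine finite_of_radical_map_eq_maximalIdeal (Ideal.span (Set.range MvPowerSeries.X)) ?_
    rw [Ideal.map_span, ← Set.range_comp, ← hx]
    congr 3
    exact funext hX
  have : IsDomain (MvPowerSeries σ (ResidueField R)) := NoZeroDivisors.to_isDomain _
  exact ⟨φ, hfin, injective_of_isIntegral_of_ringKrullDim_le hfin.to_isIntegral
    ringKrullDim_mvPowerSeries_le hdim.ge, hX⟩

end NoetherNormalization

section AbsoluteIntegralClosure

open RingTheory.Sequence

theorem flat_integralClosure_mvPowerSeries (p : ℕ) [Fact p.Prime] {d : ℕ} {k L : Type u} [Field k]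
    [Field L] [IsAlgClosed L] [CharP L p] [Algebra (MvPowerSeries (Fin d) k) L]
    [FaithfulSMul (MvPowerSeries (Fin d) k) L] :
    Module.Flat (MvPowerSeries (Fin d) k) (integralClosure (MvPowerSeries (Fin d) k) L) := by
  have hdim : ringKrullDim (MvPowerSeries (Fin d) k) < (d + 1 : ℕ) :=
    ringKrullDim_mvPowerSeries_le.trans_lt (by
      rw [Nat.card_fin]; exact_mod_cast d.lt_succ_self)
  refine flat_integralClosure p hdim (hasFlatDimensionLE_length_of_isWeaklyRegular
    isPermutablyRegular_X.isWeaklyRegular_ofFn ?_)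
  rw [← span_range_X_eq_maximalIdeal, Ideal.ofList]
  congr 1
  ext; simp [List.mem_ofFn]

theorem isWeaklyRegular_integralClosure {R L : Type u} [CommRing R] [IsNoetherianRing R]
    [IsLocalRing R] [IsAdicComplete (maximalIdeal R) R] (p : ℕ) [Fact p.Prime] [CharP R p]
    [Field L] [IsAlgClosed L] [Algebra R L] [FaithfulSMul R L] {d : ℕ} {x : Fin d → R}
    (hdim : ringKrullDim R = d) (hx : (Ideal.span (Set.range x)).radical = maximalIdeal R) :
    IsWeaklyRegular (integralClosure R L) (List.ofFn x) := by
  have hRL := FaithfulSMul.algebraMap_injective R L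
  have : CharP L p := charP_of_injective_ringHom hRL p
  obtain ⟨φ, hfin, hinj, hX⟩ := exists_finite_injective_ringHom_mvPowerSeries p
    (by rwa [Nat.card_fin]) hx
  let A := MvPowerSeries (Fin d) (ResidueField R)
  let _ : Algebra A R := φ.toAlgebra
  let _ : Algebra A L := ((algebraMap R L).comp φ).toAlgebra
  have : IsScalarTower A R L := .of_algebraMap_eq fun _ ↦ rfl
  have : FaithfulSMul A L := (faithfulSMul_iff_algebraMap_injective _ _).mpr (hRL.comp hinj)
  have : Algebra.IsIntegral A R := ⟨hfin.to_isIntegral⟩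
  have hflat : Module.Flat A (integralClosure R L) :=
    have := flat_integralClosure_mvPowerSeries p (d := d) (k := ResidueField R) (L := L)
    have : IsIntegralClosure (integralClosure R L) A L :=
      ⟨Subtype.val_injective, fun {z} ↦ ⟨fun hz ↦ ⟨⟨z, hz.tower_top⟩, rfl⟩,
        by rintro ⟨y, rfl⟩; exact isIntegral_trans _ y.2⟩⟩
    .of_linearEquiv
      (IsIntegralClosure.equiv A (integralClosure R L) L (integralClosure A L)).toLinearEquiv
  have hreg := isWeaklyRegular_of_flat (isPermutablyRegular_X.isWeaklyRegular_ofFn (A := A))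
    (integralClosure R L)
  rw [← isWeaklyRegular_map_algebraMap_iff R, List.map_ofFn] at hreg
  convert hreg
  exact funext fun i ↦ (hX i).symm

end AbsoluteIntegralClosure

section TRing

open RingTheory.Sequence

instance faithfulSMul_algebraicClosure_fractionRing (R : Type*) [CommRing R] [IsDomain R] :
    FaithfulSMul R (AlgebraicClosure (FractionRing R)) :=
  .trans R (FractionRing R) _

variable {R : Type} [CommRing R] [IsDomain R] [IsLocalRing (RPlus R)] {Λ : Type}
  [(Ideal.map (MvPolynomial.C (σ := Λ)) (maximalIdeal (RPlus R))).IsPrime]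

theorem toT_mem_maximalIdeal [IsLocalRing R] {a : R} (ha : a ∈ maximalIdeal R) :
    toT R Λ a ∈ maximalIdeal (TRing R Λ) := by
  have hplus : algebraMap R (RPlus R) a ∈ maximalIdeal (RPlus R) :=
    (map_mem_nonunits_iff (algebraMap R (RPlus R)) a).mpr ha
  exact (IsLocalization.AtPrime.to_map_mem_maximal_iff (TRing R Λ)
    (Ideal.map (MvPolynomial.C (σ := Λ)) (maximalIdeal (RPlus R))) _).mpr
    (Ideal.mem_map_of_mem MvPolynomial.C hplus)

theorem isWeaklyRegular_map_toT {xs : List R} (hxs : IsWeaklyRegular (RPlus R) xs) :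
    IsWeaklyRegular (TRing R Λ) (xs.map (toT R Λ)) := by
  have hplus := (isWeaklyRegular_map_algebraMap_iff (RPlus R) (RPlus R) xs).mpr hxs
  have hpoly := hplus.of_flat (S := MvPolynomial Λ (RPlus R))
  have hT := hpoly.of_flat (S := TRing R Λ)
  rwa [List.map_map, List.map_map] at hT

end TRing

end PlusClosure

/-- For a `d`-dimensional complete local domain `R` of characteristic `p`
with a system of parameters `x₁, …, x_d`, and `T = R⁺(t_λ : λ ∈ Λ)`, the sequence
`x₁, …, xₙ` is a regular sequence on `T` for every `1 ≤ n ≤ d`. -/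
theorem stmt12 (R : Type) [CommRing R] [IsDomain R] [IsNoetherianRing R] [IsLocalRing R]
    [IsAdicComplete (maximalIdeal R) R]
    (p : ℕ) [Fact p.Prime] [CharP R p]
    [IsLocalRing (RPlus R)] (Λ : Type)
    [(Ideal.map (MvPolynomial.C (σ := Λ)) (maximalIdeal (RPlus R))).IsPrime]
    (d : ℕ) (x : Fin d → R) (hx : IsSOP R x)
    (n : ℕ) (hn1 : 1 ≤ n) (hnd : n ≤ d) :
    RingTheory.Sequence.IsRegular (TRing R Λ)
      (((List.ofFn x).take n).map ⇑(toT R Λ)) := by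
  obtain ⟨hdim, hrad⟩ := hx
  have hplus : RingTheory.Sequence.IsWeaklyRegular (RPlus R) (List.ofFn x) :=
    PlusClosure.isWeaklyRegular_integralClosure p hdim hrad
  rw [← List.take_append_drop n (List.ofFn x),
    RingTheory.Sequence.isWeaklyRegular_append_iff] at hplus
  refine .of_isWeaklyRegular_of_mem_maximalIdeal (TRing R Λ) (fun _ ht ↦ ?_)
    (PlusClosure.isWeaklyRegular_map_toT hplus.1)
  obtain ⟨a, ha, rfl⟩ := List.mem_map.mp ht
  obtain ⟨i, rfl⟩ := List.mem_ofFn.mp (List.mem_of_mem_take ha)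
  exact PlusClosure.toT_mem_maximalIdeal
    (hrad ▸ Ideal.le_radical (Ideal.subset_span (Set.mem_range_self i)))
end

section
/- Let B be a commutative ring and let y, x_1, …, x_n be elements of B. If both x_1, …, x_n and y, x_1, …, x_n are regular sequences on B, then for each 0 ≤ k ≤ n the sequence x_1, …, x_k, y, x_{k+1}, …, x_n is a regular sequence on B. In particular, x_1, …, x_n, y is a regular sequence on B. -/
open IsLocalRing TensorProduct
set_option synthInstance.maxHeartbeats 1000000
set_option maxHeartbeats 1000000

/-!
Two facts carry the argument. If `y` is regular on `M` and `x` is regular on `M ⧸ yM`, then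
`xM ∩ yM = xyM`, so `y` is regular on `M ⧸ xM`. Moreover `M ⧸ yM` modulo `x` and `M ⧸ xM` modulo `y`
are the same module. Hence if `y, x, r₁, …, rₘ` is regular on `M`, then `y, r₁, …, rₘ` is regular on
`M ⧸ xM`, and `y` moves past the `xᵢ` one at a time.
-/

open RingTheory.Sequence Submodule
open scoped Pointwise

section

variable {R M : Type*} [CommRing R] [AddCommGroup M] [Module R M]

lemma isSMulRegular_quotSMulTop_swap {x y : R} (hy : IsSMulRegular M y)
    (hx : IsSMulRegular (QuotSMulTop y M) x) : IsSMulRegular (QuotSMulTop x M) y := by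
  rw [hy.isSMulRegular_on_quot_iff_smul_top_inf_eq_smul, inf_comm, smul_comm]
  exact smul_top_inf_eq_smul_of_isSMulRegular_on_quot hx

variable (M) in
/-- The quotient of `M ⧸ sM` by `r` as the quotient of `M` by `rM + sM`. -/
def quotSMulTopQuotSMulTopEquivQuotSup (r s : R) :
    QuotSMulTop r (QuotSMulTop s M) ≃ₗ[R] M ⧸ (s • ⊤ ⊔ r • ⊤ : Submodule R M) :=
  quotEquivOfEq _ _ (by rw [map_pointwise_smul, Submodule.map_top, range_mkQ]) ≪≫ₗ
    quotientQuotientEquivQuotientSup (s • ⊤) (r • ⊤)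

variable (M) in
/-- Reducing a module modulo `s` and then `r` is the same as reducing modulo `r` and then `s`. -/
def quotSMulTopComm (r s : R) :
    QuotSMulTop r (QuotSMulTop s M) ≃ₗ[R] QuotSMulTop s (QuotSMulTop r M) :=
  quotSMulTopQuotSMulTopEquivQuotSup M r s ≪≫ₗ quotEquivOfEq _ _ (sup_comm _ _) ≪≫ₗ
    (quotSMulTopQuotSMulTopEquivQuotSup M s r).symm

lemma isRegular_quotSMulTop_of_cons_cons {x y : R} {rs : List R}
    (h : IsRegular M (y :: x :: rs)) : IsRegular (QuotSMulTop x M) (y :: rs) := by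
  simp only [isRegular_cons_iff] at h
  obtain ⟨hy, hx, hrs⟩ := h
  exact .cons (isSMulRegular_quotSMulTop_swap hy hx)
    (((quotSMulTopComm M x y).isRegular_congr rs).mp hrs)

theorem stmt13_general {y : R} {xs ys : List R} (hxs : IsWeaklyRegular M xs)
    (h : IsRegular M (y :: (xs ++ ys))) : IsRegular M (xs ++ y :: ys) := by
  induction hxs with
  | nil => exact h
  | cons x xs hx _ ih => exact .cons hx (ih (isRegular_quotSMulTop_of_cons_cons h))

end

/-- If `x₁, …, xₙ` and `y, x₁, …, xₙ` are regular sequences on `B`, then so is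
`x₁, …, x_k, y, x_{k+1}, …, xₙ` for each `0 ≤ k ≤ n` (in particular `x₁, …, xₙ, y`). -/
theorem stmt13 (B : Type) [CommRing B] (y : B) (xs : List B)
    (h1 : RingTheory.Sequence.IsRegular B xs)
    (h2 : RingTheory.Sequence.IsRegular B (y :: xs))
    (k : ℕ) (hk : k ≤ xs.length) :
    RingTheory.Sequence.IsRegular B (xs.take k ++ y :: xs.drop k) := by
  rw [← xs.take_append_drop k] at h1 h2
  exact stmt13_general ((isWeaklyRegular_append_iff B _ _).mp h1.toIsWeaklyRegular).1 h2
end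

section
/- Let (R, m) be a d-dimensional Noetherian local domain of prime characteristic p, let x_1, …, x_d be a system of parameters of R, and let T be a (commutative) R-algebra such that x_d is a nonzerodivisor on T/(x_1, …, x_{d−1})T. Then for every element y ∈ R and for each n ∈ {d − 1, d}, there exists a positive integer N_0 such that (x_1, …, x_n)T :_T y^∞ = (x_1, …, x_n)T :_T y^{N_0}. -/
open IsLocalRing TensorProduct
set_option synthInstance.maxHeartbeats 1000000
set_option maxHeartbeats 1000000

/-!
Put `I = (x₁, …, xₙ)` and let `K = IT`. The point is a relation `y ^ k * (x ^ m - c * y) ∈ I` in `R`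
with `x` regular on `T ⧸ K`: then `y ^ (k + 1) * u ∈ K` forces `x ^ m * (y ^ k * u) ∈ K`, hence
`y ^ k * u ∈ K`, and the chain of colon ideals is constant from `k` on. The elements
`y ^ k * (x ^ m - c * y)` form a multiplicative set, so such a relation exists as soon as
`x ∈ √(P + (y))` for every prime `P ⊇ I` with `y ∉ P`. For `n = d - 1` take `x = x_d`: since
`dim R ⧸ I ≤ 1` by Krull's principal ideal theorem, the only prime strictly above such a `P` is the
maximal ideal. For `n = d` the only prime containing `I` is the maximal ideal, and `x = 1` works.
-/

section Colon

variable {T : Type*} [CommRing T] {K : Ideal T} {x y c : T} {k m : ℕ}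

lemma colon_span_pow_mono (K : Ideal T) (y : T) :
    Monotone fun N : ℕ ↦ K.colon (Ideal.span {y ^ N}) := fun _ _ hMN ↦
  Submodule.colon_mono le_rfl
    (Ideal.span_singleton_le_span_singleton.2 (pow_dvd_pow y hMN))

lemma colon_span_pow_add_le
    (hstep : K.colon (Ideal.span {y ^ (k + 1)}) ≤ K.colon (Ideal.span {y ^ k})) (j : ℕ) :
    K.colon (Ideal.span {y ^ (k + j)}) ≤ K.colon (Ideal.span {y ^ k}) := by
  induction j with
  | zero => rfl
  | succ j ih =>
    refine le_trans (fun u hu ↦ ?_) hstep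
    have huy : u * y ∈ K.colon (Ideal.span {y ^ (k + j)}) := by
      rw [Ideal.mem_colon_span_singleton] at hu ⊢
      rwa [mul_assoc, ← pow_succ']
    have huyk := ih huy
    rw [Ideal.mem_colon_span_singleton] at huyk ⊢
    rwa [pow_succ', ← mul_assoc]

lemma iSup_colon_span_pow_eq
    (hstep : K.colon (Ideal.span {y ^ (k + 1)}) ≤ K.colon (Ideal.span {y ^ k})) {N₀ : ℕ}
    (hN₀ : k ≤ N₀) :
    ⨆ N : ℕ, K.colon (Ideal.span {y ^ N}) = K.colon (Ideal.span {y ^ N₀}) := by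
  have hmono := colon_span_pow_mono K y
  refine le_antisymm (iSup_le fun N ↦ ?_)
    (le_iSup (fun N : ℕ ↦ K.colon (Ideal.span {y ^ N} : Ideal T)) N₀)
  calc
    K.colon (Ideal.span {y ^ N}) ≤ K.colon (Ideal.span {y ^ (k + N)}) := hmono (by omega)
    _ ≤ K.colon (Ideal.span {y ^ k}) := colon_span_pow_add_le hstep N
    _ ≤ K.colon (Ideal.span {y ^ N₀}) := hmono hN₀

lemma colon_span_pow_succ_le_of_isSMulRegular (hx : IsSMulRegular (T ⧸ K) x)
    (hrel : y ^ k * (x ^ m - c * y) ∈ K) :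
    K.colon (Ideal.span {y ^ (k + 1)}) ≤ K.colon (Ideal.span {y ^ k}) := by
  intro u hu
  rw [Ideal.mem_colon_span_singleton] at hu ⊢
  refine mem_of_isSMulRegular_quotient_of_smul_mem (hx.pow m) ?_
  have hsplit : x ^ m • (u * y ^ k) =
      u * (y ^ k * (x ^ m - c * y)) + c * (u * y ^ (k + 1)) := by
    rw [smul_eq_mul]
    ring
  rw [hsplit]
  exact K.add_mem (K.mul_mem_left u hrel) (K.mul_mem_left c hu)

end Colon

lemma exists_pow_mul_pow_sub_mul_mem {R : Type*} [CommRing R] {I : Ideal R} {x y : R}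
    (hprime : ∀ P : Ideal R, P.IsPrime → I ≤ P → y ∉ P → x ∈ (P ⊔ Ideal.span {y}).radical) :
    ∃ (k m : ℕ) (c : R), y ^ k * (x ^ m - c * y) ∈ I := by
  by_contra! hnot
  let S : Submonoid R :=
    { carrier := {z | ∃ (k m : ℕ) (c : R), y ^ k * (x ^ m - c * y) = z}
      one_mem' := ⟨0, 0, 0, by simp⟩
      mul_mem' := by
        rintro _ _ ⟨k, m, c, rfl⟩ ⟨k', m', c', rfl⟩
        exact ⟨k + k', m + m', c * x ^ m' + c' * x ^ m - c * c' * y, by ring⟩ }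
  have hIS : Disjoint (I : Set R) S := by
    rw [Set.disjoint_left]
    rintro _ hzI ⟨k, m, c, rfl⟩
    exact hnot k m c hzI
  obtain ⟨P, hP, hIP, hPS⟩ := Ideal.exists_le_prime_disjoint I S hIS
  rw [Set.disjoint_left] at hPS
  have hyP : y ∉ P := fun hy ↦ hPS hy ⟨1, 0, 0, by simp⟩
  obtain ⟨m, hm⟩ := hprime P hP hIP hyP
  rw [sup_comm, Ideal.mem_span_singleton_sup] at hm
  obtain ⟨c, b, hbP, hb⟩ := hm
  exact hPS hbP ⟨0, m, c, by rw [← hb]; ring⟩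

theorem exists_iSup_colon_span_pow_eq_of_isSMulRegular {R T : Type*} [CommRing R] [CommRing T]
    [Algebra R T] {I : Ideal R} {x y : R}
    (hprime : ∀ P : Ideal R, P.IsPrime → I ≤ P → y ∉ P → x ∈ (P ⊔ Ideal.span {y}).radical)
    (hx : IsSMulRegular (T ⧸ I.map (algebraMap R T)) (algebraMap R T x)) :
    ∃ N₀ : ℕ, 0 < N₀ ∧
      ⨆ N : ℕ, (I.map (algebraMap R T)).colon (Ideal.span {algebraMap R T y ^ N}) =
        (I.map (algebraMap R T)).colon (Ideal.span {algebraMap R T y ^ N₀}) := by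
  obtain ⟨k, m, c, hrel⟩ := exists_pow_mul_pow_sub_mul_mem hprime
  have hrelT := Ideal.mem_map_of_mem (algebraMap R T) hrel
  simp only [map_mul, map_sub, map_pow] at hrelT
  exact ⟨k + 1, k.succ_pos, iSup_colon_span_pow_eq
    (colon_span_pow_succ_le_of_isSMulRegular hx hrelT) k.le_succ⟩

section LocalRing

variable {R : Type*} [CommRing R] [IsLocalRing R] {I P Q : Ideal R} {x y : R}

lemma eq_maximalIdeal_of_radical_eq [P.IsPrime] (hI : I.radical = maximalIdeal R) (hIP : I ≤ P) :
    P = maximalIdeal R :=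
  le_antisymm (le_maximalIdeal_of_isPrime P)
    (hI ▸ (Ideal.IsPrime.radical_le_iff inferInstance).2 hIP)

lemma one_mem_radical_sup_span_singleton [P.IsPrime] (hI : I.radical = maximalIdeal R)
    (hIP : I ≤ P) (hy : y ∉ P) : 1 ∈ (P ⊔ Ideal.span {y}).radical := by
  rw [eq_maximalIdeal_of_radical_eq hI hIP, notMem_maximalIdeal] at hy
  rw [Ideal.span_singleton_eq_top.2 hy, sup_top_eq, Ideal.radical_top]
  exact Submodule.mem_top

variable [IsNoetherianRing R]

lemma eq_maximalIdeal_of_lt_of_radical_span_singleton_sup_eq [P.IsPrime] [Q.IsPrime]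
    (hx : (Ideal.span {x} ⊔ I).radical = maximalIdeal R) (hIP : I ≤ P) (hPQ : P < Q) :
    Q = maximalIdeal R := by
  by_contra hQ
  have hQm : Q < maximalIdeal R := lt_of_le_of_ne (le_maximalIdeal_of_isPrime Q) hQ
  have hxm : x ∈ maximalIdeal R :=
    hx ▸ Ideal.le_radical (Ideal.mem_sup_left (Ideal.mem_span_singleton_self x))
  obtain ⟨q, hxq, hPq, hqm⟩ := PrimeSpectrum.exist_mem_one_of_mem_maximal_ideal
    (p₀ := ⟨P, inferInstance⟩) (p₁ := ⟨Q, inferInstance⟩) hPQ hQm hxm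
  have hle : Ideal.span {x} ⊔ I ≤ q.asIdeal :=
    sup_le ((Ideal.span_singleton_le_iff_mem _).2 hxq) (hIP.trans hPq.le)
  exact hqm.ne (eq_maximalIdeal_of_radical_eq hx hle)

lemma maximalIdeal_le_radical_sup_span_singleton [P.IsPrime]
    (hx : (Ideal.span {x} ⊔ I).radical = maximalIdeal R) (hIP : I ≤ P) (hy : y ∉ P) :
    maximalIdeal R ≤ (P ⊔ Ideal.span {y}).radical := by
  rw [Ideal.radical_eq_sInf]
  refine le_sInf fun Q ⟨hQ, _⟩ ↦ ?_
  have hyQ : y ∈ Q := hQ (Ideal.mem_sup_right (Ideal.mem_span_singleton_self y))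
  have hPQ : P < Q := lt_of_le_of_ne (le_sup_left.trans hQ) fun h ↦ hy (h ▸ hyQ)
  exact (eq_maximalIdeal_of_lt_of_radical_span_singleton_sup_eq hx hIP hPQ).ge

end LocalRing

lemma range_eq_insert_image_lt {α : Type*} {d : ℕ} (hd : 0 < d) (x : Fin d → α) :
    Set.range x =
      insert (x ⟨d - 1, Nat.sub_one_lt_of_lt hd⟩) (x '' {i | (i : ℕ) < d - 1}) := by
  rw [← Set.image_insert_eq, ← Set.image_univ]
  congr 1
  ext i
  simp only [Set.mem_univ, Set.mem_insert_iff, Set.mem_ofPred_eq, Fin.ext_iff, true_iff]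
  omega

theorem stmt15_general {R : Type*} [CommRing R] [IsNoetherianRing R] [IsLocalRing R]
    {d : ℕ} (hd : 0 < d) {x : Fin d → R}
    (hx : (Ideal.span (Set.range x)).radical = maximalIdeal R)
    {T : Type*} [CommRing T] [Algebra R T]
    (hnzd : ∀ u : T, algebraMap R T (x ⟨d - 1, Nat.sub_one_lt_of_lt hd⟩) * u ∈
          Ideal.span (⇑(algebraMap R T) '' (x '' {i | (i : ℕ) < d - 1})) →
        u ∈ Ideal.span (⇑(algebraMap R T) '' (x '' {i | (i : ℕ) < d - 1})))
    (y : R) {n : ℕ} (hn : n = d - 1 ∨ n = d) :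
    ∃ N₀ : ℕ, 0 < N₀ ∧
      (⨆ N : ℕ, (Ideal.span (⇑(algebraMap R T) '' (x '' {i | (i : ℕ) < n}))).colon
          (Ideal.span {algebraMap R T y ^ N})) =
        (Ideal.span (⇑(algebraMap R T) '' (x '' {i | (i : ℕ) < n}))).colon
          (Ideal.span {algebraMap R T y ^ N₀}) := by
  simp only [← Ideal.map_span] at hnzd ⊢
  rcases hn with rfl | rfl
  · have hlast : x ⟨d - 1, Nat.sub_one_lt_of_lt hd⟩ ∈ maximalIdeal R :=
      hx ▸ Ideal.le_radical (Ideal.subset_span (Set.mem_range_self _))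
    rw [range_eq_insert_image_lt hd x, Ideal.span_insert] at hx
    exact exists_iSup_colon_span_pow_eq_of_isSMulRegular
      (fun P _ hIP hy ↦ maximalIdeal_le_radical_sup_span_singleton hx hIP hy hlast)
      ((isSMulRegular_quotient_iff_mem_of_smul_mem _ _).2 hnzd)
  · have hrange : x '' {i | (i : ℕ) < n} = Set.range x := by simp
    rw [hrange]
    exact exists_iSup_colon_span_pow_eq_of_isSMulRegular (x := 1)
      (fun P _ hIP hy ↦ one_mem_radical_sup_span_singleton hx hIP hy)
      (by simpa only [map_one] using IsSMulRegular.one _)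

/-- For a `d`-dimensional local domain `R` of characteristic `p` with a system
of parameters `x₁, …, x_d` and an `R`-algebra `T` on which `x_d` is a nonzerodivisor modulo
`(x₁, …, x_{d-1})T`, the colon ideal `(x₁, …, xₙ)T : y^∞` stabilizes for `n ∈ {d-1, d}`. -/
theorem stmt15 (R : Type) [CommRing R] [IsDomain R] [IsNoetherianRing R] [IsLocalRing R]
    (p : ℕ) [Fact p.Prime] [CharP R p]
    (d : ℕ) (hd1 : 0 < d)
    (x : Fin d → R) (hx : IsSOP R x)
    (T : Type) [CommRing T] [Algebra R T]
    (hnzd : ∀ u : T, algebraMap R T (x ⟨d - 1, by omega⟩) * u ∈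
          Ideal.span (⇑(algebraMap R T) '' (x '' {i | (i : ℕ) < d - 1})) →
        u ∈ Ideal.span (⇑(algebraMap R T) '' (x '' {i | (i : ℕ) < d - 1})))
    (y : R) (n : ℕ) (hn : n = d - 1 ∨ n = d) :
    ∃ N₀ : ℕ, 0 < N₀ ∧
      (⨆ N : ℕ, (Ideal.span (⇑(algebraMap R T) '' (x '' {i | (i : ℕ) < n}))).colon
          (Ideal.span {algebraMap R T y ^ N})) =
        (Ideal.span (⇑(algebraMap R T) '' (x '' {i | (i : ℕ) < n}))).colon
          (Ideal.span {algebraMap R T y ^ N₀}) :=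
  stmt15_general hd1 hx.2 hnzd y hn
end
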